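/- arXiv:1709.07112 — 5 statements merged into one kernel-verified Lean document; each statement's English description precedes it below -/
import Mathlib

section
/- Fix n ≥ 1 and dimensions n_j, m. For i = 1, …, n let H_i : [0,∞) → ℝ^{n_j×n_j} be continuously differentiable with H_i(t) symmetric and μI ⪯ H_i(t) ⪯ MI (0 < μ ≤ M); let C_i be continuous and bounded with H_i'(t) = C_i(t) + C_i(t)ᵀ; let K_{D_i}, P_i be symmetric positive definite; and let Y_i : [0,∞) → ℝ^{n_j×m} be continuously differentiable with Y_i and Y_i' bounded. Let t_1 < t_2 < … be switching times tending to ∞ with t_{j+1} − t_j ≥ t_d for some t_d > 0, and let the neighbor sets 𝒩_i(t) ⊆ {1,…,n}\{i} be constant on each interval [t_j, t_{j+1}) and symmetric (j ∈ 𝒩_i(t) ⇔ i ∈ 𝒩_j(t)), with constant symmetric positive definite gains K_{ij} = K_{ji} ∈ ℝ^{m×m} for each unordered pair. Suppose there exist indices i_1 < i_2 < … and a bound B > 0 with t_{i_{k+1}} − t_{i_k} ≤ B such that for each k the graph on {1,…,n} whose edge set is the union over t ∈ [t_{i_k}, t_{i_{k+1}}) of the communication edges {i,j : j ∈ 𝒩_i(t)}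 is connected. Suppose differentiable s_i and ã_i satisfy H_i(t)ṡ_i(t) + (C_i(t) + K_{D_i})s_i(t) = Y_i(t)ã_i(t) and ã̇_i(t) = −P_i[Y_i(t)ᵀs_i(t) − ∑_{j ∈ 𝒩_i(t)} K_{ij}(ã_j(t) − ã_i(t))]. If {Y_1, …, Y_n} is collectively persistently exciting, then every parameter error satisfies ã_i(t) → 0 as t → ∞. -/
/-!
The proof is a Lyapunov argument. With `V = ∑ᵢ (sᵢᵀ Hᵢ sᵢ + ãᵢᵀ Pᵢ⁻¹ ãᵢ)`, skew-symmetry of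
`Hᵢ' - 2 Cᵢ` cancels the regressor terms and the symmetry of the graph turns the coupling into a sum
of squares (`coupling_symm`), so that `V'` is minus a positive definite form in all `sᵢ` and in the
differences `ãⱼ - ãᵢ` along the active edges. Hence all signals are bounded and Lipschitz. The
Barbalat-type lemma `small_of_dissipation` gives `sᵢ → 0`, and, since every edge stays active for at
least the dwell time, it also makes the differences along active edges vanish as `t → ∞`. Therefore
`ãᵢ' → 0`.

As each `ãᵢ` now varies by `o(1)` over windows of bounded length, a difference that is small at
some time of a window is small throughout it. Chaining along the paths of the connected union graph
(`tendsto_of_chain`) gives consensus, `ãⱼ - ãᵢ → 0`. On the other hand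
`(Hᵢ sᵢ)' = Yᵢ ãᵢ + (Cᵢᵀ - K_Dᵢ) sᵢ`, where `Hᵢ sᵢ → 0` and the last term tends to zero, so the
perturbed Barbalat lemma `barbalat` yields `Yᵢ ãᵢ → 0`; working with `Hᵢ sᵢ` rather than `sᵢ'` avoids
asking for uniform continuity of `Cᵢ`. By consensus and slow variation, `Yᵢ(τ) ãₖ(t) → 0` uniformly
for `τ ∈ [t, t + T]`, for all `i` and `k`, and collective persistency of excitation (`pe_bound`)
forces `ãₖ(t) → 0`.
-/

open Matrix MeasureTheory Filter Topology

/-- The (unnormalized) integral of the Gram matrix `Wᵀ W` over the window `[t, t+T]`. -/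
noncomputable def gramInt {P : Type} [Fintype P] {m : ℕ}
    (W : ℝ → Matrix P (Fin m) ℝ) (t T : ℝ) : Matrix (Fin m) (Fin m) ℝ :=
  Matrix.of fun a b => ∫ τ in t..(t + T), ((W τ)ᵀ * W τ) a b

/-- The family `{W i}` is collectively persistently exciting with window `T` and level `α`. -/
def CollPEWith {ι : Type} [Fintype ι] {P : ι → Type} [∀ i, Fintype (P i)] {m : ℕ}
    (W : (i : ι) → ℝ → Matrix (P i) (Fin m) ℝ) (T α : ℝ) : Prop :=
  ∀ t, 0 ≤ t →
    (T⁻¹ • (∑ i, gramInt (W i) t T) - α • (1 : Matrix (Fin m) (Fin m) ℝ)).PosSemidef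

/-! ### Scalar functions on the half-line -/

/-- `f` is bounded on `[0, ∞)`. -/
def BddPos (f : ℝ → ℝ) : Prop := ∃ c, ∀ t, 0 ≤ t → |f t| ≤ c

namespace BddPos

lemma const (c : ℝ) : BddPos (fun _ => c) := ⟨|c|, fun _ _ => le_rfl⟩

lemma add {f g : ℝ → ℝ} (hf : BddPos f) (hg : BddPos g) : BddPos (fun t => f t + g t) := by
  obtain ⟨c, hc⟩ := hf
  obtain ⟨d, hd⟩ := hg
  exact ⟨c + d, fun t ht => (abs_add_le _ _).trans (add_le_add (hc t ht) (hd t ht))⟩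

lemma neg {f : ℝ → ℝ} (hf : BddPos f) : BddPos (fun t => -f t) := by
  obtain ⟨c, hc⟩ := hf
  exact ⟨c, fun t ht => by simpa using hc t ht⟩

lemma sub {f g : ℝ → ℝ} (hf : BddPos f) (hg : BddPos g) : BddPos (fun t => f t - g t) := by
  simpa [sub_eq_add_neg] using hf.add hg.neg

lemma mul {f g : ℝ → ℝ} (hf : BddPos f) (hg : BddPos g) : BddPos (fun t => f t * g t) := by
  obtain ⟨c, hc⟩ := hf
  obtain ⟨d, hd⟩ := hg
  refine ⟨c * d, fun t ht => ?_⟩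
  rw [abs_mul]
  exact mul_le_mul (hc t ht) (hd t ht) (abs_nonneg _) ((abs_nonneg _).trans (hc t ht))

lemma sum {ι : Type*} (u : Finset ι) {f : ι → ℝ → ℝ} (hf : ∀ i, BddPos (f i)) :
    BddPos (fun t => ∑ i ∈ u, f i t) := by
  choose c hc using hf
  exact ⟨∑ i ∈ u, c i, fun t ht =>
    (Finset.abs_sum_le_sum_abs _ _).trans (Finset.sum_le_sum fun i _ => hc i t ht)⟩

lemma ite {p : ℝ → Prop} [DecidablePred p] {f : ℝ → ℝ} (hf : BddPos f) :
    BddPos (fun t => if p t then f t else 0) := by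
  obtain ⟨c, hc⟩ := hf
  refine ⟨c, fun t ht => ?_⟩
  dsimp only
  split_ifs
  · exact hc t ht
  · simpa using (abs_nonneg _).trans (hc t ht)

lemma of_sq_le {f : ℝ → ℝ} {c : ℝ} (h : ∀ t, 0 ≤ t → f t ^ 2 ≤ c) : BddPos f :=
  ⟨√c, fun t ht => Real.abs_le_sqrt (h t ht)⟩

lemma mul_tendsto {β : Type*} {l : Filter β} {f : ℝ → ℝ} {u : β → ℝ} {g : β → ℝ}
    (hf : BddPos f) (hu : Tendsto u l atTop) (hg : Tendsto g l (𝓝 0)) :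
    Tendsto (fun b => f (u b) * g b) l (𝓝 0) := by
  obtain ⟨c, hc⟩ := hf
  exact bdd_le_mul_tendsto_zero' c
    ((hu.eventually (eventually_ge_atTop 0)).mono fun b hb => hc _ hb) hg

lemma lipschitz {f f' : ℝ → ℝ} (hf' : BddPos f')
    (hf : ∀ t, 0 ≤ t → HasDerivWithinAt f (f' t) (Set.Ici 0) t) :
    ∃ L > 0, ∀ x, 0 ≤ x → ∀ y, 0 ≤ y → |f x - f y| ≤ L * |x - y| := by
  obtain ⟨c, hc⟩ := hf'
  refine ⟨max c 1, by positivity, fun x hx y hy => ?_⟩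
  refine (Convex.norm_image_sub_le_of_norm_hasDerivWithin_le (s := Set.Ici 0) (C := c)
    (fun t ht => hf t ht) (fun t ht => hc t ht) (convex_Ici 0) hy hx).trans ?_
  rw [Real.norm_eq_abs]
  gcongr
  exact le_max_left _ _

end BddPos

lemma le_of_deriv_le {V V' : ℝ → ℝ} (hV : ∀ t, 0 ≤ t → HasDerivWithinAt V (V' t) (Set.Ici 0) t)
    {x y k : ℝ} (hx : 0 ≤ x) (hxy : x ≤ y) (hk : ∀ τ ∈ Set.Ioo x y, V' τ ≤ k) :
    V y - V x ≤ k * (y - x) := by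
  rcases hxy.eq_or_lt with rfl | hlt
  · simp
  obtain ⟨c, hc, h⟩ := exists_hasDerivAt_eq_slope V V' hlt
    (fun t ht => ((hV t (hx.trans ht.1)).continuousWithinAt).mono
      (fun z hz => hx.trans hz.1))
    (fun t ht => (hV t (hx.trans ht.1.le)).hasDerivAt (Ici_mem_nhds (hx.trans_lt ht.1)))
  have := hk c hc
  rw [h, div_le_iff₀ (sub_pos.2 hlt)] at this
  exact this

/-- The Lyapunov form of Barbalat's lemma, for an estimate `V' ≤ -c f²` that is only available
on the intervals where `A` is active: if those intervals have length at least `d`, then `f` vanishes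
in the limit along the times at which `A` holds. -/
lemma small_of_dissipation {V V' f : ℝ → ℝ}
    (hV : ∀ t, 0 ≤ t → HasDerivWithinAt V (V' t) (Set.Ici 0) t)
    (hV0 : ∀ t, 0 ≤ t → 0 ≤ V t) (hV' : ∀ t, 0 ≤ t → V' t ≤ 0)
    (A : ℝ → Prop) {c d L : ℝ} (hc : 0 < c) (hd : 0 < d) (hL0 : 0 < L)
    (hL : ∀ x, 0 ≤ x → ∀ y, 0 ≤ y → |f x - f y| ≤ L * |x - y|)
    (hA : ∀ t, 0 ≤ t → A t → ∃ a b, 0 ≤ a ∧ a + d ≤ b ∧ a ≤ t ∧ t < b ∧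
      ∀ τ ∈ Set.Ico a b, V' τ ≤ -(c * f τ ^ 2)) :
    ∀ ε > 0, ∀ᶠ t in atTop, A t → |f t| < ε := by
  intro ε hε
  have hanti : ∀ x y, 0 ≤ x → x ≤ y → V y ≤ V x := fun x y hx hxy => by
    have := le_of_deriv_le hV hx hxy (k := 0) fun τ hτ => hV' τ (hx.trans hτ.1.le)
    linarith
  -- if `|f t| ≥ ε`, then `|f| ≥ ε / 2` on `[t - δ, t + δ]`, and one half of it lies in `[a, b]`
  obtain ⟨δ, hδ, hδd, hδL⟩ : ∃ δ > 0, 2 * δ ≤ d ∧ L * δ ≤ ε / 2 := by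
    refine ⟨min (d / 2) (ε / (2 * L)), by positivity, ?_, ?_⟩
    · have := min_le_left (d / 2) (ε / (2 * L)); linarith
    · calc L * min (d / 2) (ε / (2 * L)) ≤ L * (ε / (2 * L)) := by
            gcongr; exact min_le_right _ _
        _ = ε / 2 := by field_simp
  obtain ⟨T0, hT0, hT⟩ : ∃ T0, 0 ≤ T0 ∧ V T0 < sInf (V '' Set.Ici 0) + c * (ε / 2) ^ 2 * δ := by
    obtain ⟨_, ⟨T0, hT0, rfl⟩, h⟩ := Real.lt_sInf_add_pos (s := V '' Set.Ici 0)
      ⟨V 0, 0, by simp, rfl⟩ (ε := c * (ε / 2) ^ 2 * δ) (by positivity)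
    exact ⟨T0, hT0, h⟩
  have hinf : ∀ t, 0 ≤ t → sInf (V '' Set.Ici 0) ≤ V t := fun t ht =>
    csInf_le ⟨0, by rintro _ ⟨z, hz, rfl⟩; exact hV0 z hz⟩ ⟨t, ht, rfl⟩
  filter_upwards [eventually_ge_atTop (T0 + d)] with t ht hAt
  by_contra! hcon
  have ht0 : 0 ≤ t := by linarith
  obtain ⟨a, b, ha, hab, hat, htb, hdis⟩ := hA t ht0 hAt
  obtain ⟨x, hxT, hax, hxb, hxt, htx⟩ : ∃ x, T0 ≤ x ∧ a ≤ x ∧ x + δ ≤ b ∧ t - δ ≤ x ∧ x ≤ t := by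
    by_cases h : t + δ ≤ b
    · exact ⟨t, by linarith, hat, h, by linarith, le_rfl⟩
    · exact ⟨t - δ, by linarith, by linarith, by linarith, le_rfl, by linarith⟩
  have hx0 : 0 ≤ x := hT0.trans hxT
  have hdrop := le_of_deriv_le hV hx0 (y := x + δ) (by linarith) (k := -(c * (ε / 2) ^ 2)) (by
    intro τ hτ
    refine (hdis τ ⟨hax.trans hτ.1.le, hτ.2.trans_le hxb⟩).trans ?_
    have h1 := hL t ht0 τ (hx0.trans hτ.1.le)
    have h2 : |t - τ| ≤ δ := abs_le.2 ⟨by linarith [hτ.2], by linarith [hτ.1]⟩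
    have h3 : L * |t - τ| ≤ L * δ := by gcongr
    have h4 := abs_sub_abs_le_abs_sub (f t) (f τ)
    have h5 : ε / 2 ≤ |f τ| := by linarith
    have h6 : (ε / 2) ^ 2 ≤ f τ ^ 2 := by
      rw [← sq_abs (f τ)]; gcongr
    have := mul_le_mul_of_nonneg_left h6 hc.le
    linarith)
  have h1 := hinf (x + δ) (by linarith)
  have h2 := hanti T0 x hT0 hxT
  nlinarith

lemma barbalat_upper {g f r : ℝ → ℝ} {L : ℝ} (hL0 : 0 < L)
    (hg : ∀ t, 0 ≤ t → HasDerivWithinAt g (f t + r t) (Set.Ici 0) t)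
    (hg0 : Tendsto g atTop (𝓝 0)) (hr0 : Tendsto r atTop (𝓝 0))
    (hL : ∀ x, 0 ≤ x → ∀ y, 0 ≤ y → |f x - f y| ≤ L * |x - y|) :
    ∀ ε > 0, ∀ᶠ t in atTop, f t < ε := by
  intro ε hε
  obtain ⟨δ, hδ, hδL⟩ : ∃ δ > 0, L * δ = ε / 4 := ⟨ε / 4 / L, by positivity, by field_simp⟩
  have e1 := (Metric.tendsto_atTop.1 hg0) (ε * δ / 4) (by positivity)
  have e2 := (Metric.tendsto_atTop.1 hr0) (ε / 4) (by positivity)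
  obtain ⟨T1, h1⟩ := e1
  obtain ⟨T2, h2⟩ := e2
  filter_upwards [eventually_ge_atTop T1, eventually_ge_atTop T2, eventually_ge_atTop 0]
    with t ht1 ht2 ht0
  by_contra! hcon
  have hneg : ∀ t, 0 ≤ t → HasDerivWithinAt (fun t => -g t) (-(f t + r t)) (Set.Ici 0) t :=
    fun t ht => (hg t ht).fun_neg
  have hd := le_of_deriv_le hneg ht0 (y := t + δ) (by linarith) (k := -(ε / 2)) (by
    intro τ hτ
    have a1 := hL t ht0 τ (ht0.trans hτ.1.le)
    have a2 : |t - τ| ≤ δ := abs_le.2 ⟨by linarith [hτ.2], by linarith [hτ.1]⟩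
    have a3 : L * |t - τ| ≤ L * δ := by gcongr
    have a4 := h2 τ (le_trans ht2 hτ.1.le)
    rw [Real.dist_eq, sub_zero] at a4
    have a5 := (abs_le.1 a1).2
    have a6 := (abs_lt.1 a4).1
    linarith)
  have b1 := h1 t ht1
  have b2 := h1 (t + δ) (by linarith)
  rw [Real.dist_eq, sub_zero] at b1 b2
  have b3 := (abs_lt.1 b1).1
  have b4 := (abs_lt.1 b2).2
  nlinarith

/-- Barbalat's lemma with a perturbation: only the part `f` of the derivative `f + r` has to be
Lipschitz, provided that the remainder `r` tends to zero. -/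
lemma barbalat {g f r : ℝ → ℝ} {L : ℝ} (hL0 : 0 < L)
    (hg : ∀ t, 0 ≤ t → HasDerivWithinAt g (f t + r t) (Set.Ici 0) t)
    (hg0 : Tendsto g atTop (𝓝 0)) (hr0 : Tendsto r atTop (𝓝 0))
    (hL : ∀ x, 0 ≤ x → ∀ y, 0 ≤ y → |f x - f y| ≤ L * |x - y|) :
    Tendsto f atTop (𝓝 0) := by
  have h1 := barbalat_upper hL0 hg hg0 hr0 hL
  have h2 := barbalat_upper (g := fun t => -g t) (f := fun t => -f t) (r := fun t => -r t) hL0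
    (fun t ht => by
      have := (hg t ht).fun_neg
      rwa [neg_add] at this)
    (by simpa using hg0.neg) (by simpa using hr0.neg)
    (fun x hx y hy => by
      rw [show -f x - -f y = -(f x - f y) by ring, abs_neg]; exact hL x hx y hy)
  rw [Metric.tendsto_nhds]
  intro ε hε
  filter_upwards [h1 ε hε, h2 ε hε] with t a b
  rw [Real.dist_eq, sub_zero, abs_lt]
  exact ⟨by linarith, a⟩

/-- The filter on pairs `(t, τ)` expressing that `t → ∞` while `τ` stays in the sliding window
`[t, t + R]`. Convergence along it is convergence uniform over the window. -/
def win (R : ℝ) : Filter (ℝ × ℝ) :=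
  comap Prod.fst atTop ⊓ 𝓟 {p | p.1 ≤ p.2 ∧ p.2 ≤ p.1 + R}

lemma win_fst (R : ℝ) : Tendsto Prod.fst (win R) atTop :=
  tendsto_comap.mono_left inf_le_left

lemma win_mem (R : ℝ) : ∀ᶠ p in win R, p.1 ≤ p.2 ∧ p.2 ≤ p.1 + R :=
  mem_inf_of_right (mem_principal_self _)

lemma win_snd (R : ℝ) : Tendsto Prod.snd (win R) atTop :=
  tendsto_atTop_mono' _ ((win_mem R).mono fun _ h => h.1) (win_fst R)

lemma win_unif {R : ℝ} {p : ℝ × ℝ → Prop} (h : ∀ᶠ q in win R, p q) :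
    ∀ᶠ t in atTop, ∀ τ, t ≤ τ → τ ≤ t + R → p (t, τ) := by
  rw [win, eventually_inf_principal, eventually_comap] at h
  exact h.mono fun t ht τ h1 h2 => ht (t, τ) rfl ⟨h1, h2⟩

lemma win_of_unif {R : ℝ} {p : ℝ × ℝ → Prop}
    (h : ∀ᶠ t in atTop, ∀ τ, t ≤ τ → τ ≤ t + R → p (t, τ)) : ∀ᶠ q in win R, p q := by
  rw [win, eventually_inf_principal, eventually_comap]
  refine h.mono fun t ht => ?_
  rintro ⟨_, τ⟩ rfl hq
  exact ht τ hq.1 hq.2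

/-- A function whose derivative tends to zero varies by `o(1)` over windows of bounded length. -/
lemma win_slow {f D : ℝ → ℝ} {R : ℝ} (hR : 0 ≤ R)
    (hf : ∀ t, 0 ≤ t → HasDerivWithinAt f (D t) (Set.Ici 0) t)
    (hD : Tendsto D atTop (𝓝 0)) :
    Tendsto (fun p : ℝ × ℝ => f p.2 - f p.1) (win R) (𝓝 0) := by
  rw [Metric.tendsto_nhds]
  intro ε hε
  apply win_of_unif
  obtain ⟨T0, h0⟩ := (Metric.tendsto_atTop.1 hD) (ε / (R + 1)) (by positivity)
  filter_upwards [eventually_ge_atTop T0, eventually_ge_atTop 0] with t ht ht0 τ h1 h2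
  have hb := Convex.norm_image_sub_le_of_norm_hasDerivWithin_le (s := Set.Ici t) (f := f) (f' := D)
    (C := ε / (R + 1)) (x := t) (y := τ)
    (fun z hz => (hf z (ht0.trans hz)).mono (Set.Ici_subset_Ici.2 ht0))
    (fun z hz => by
      have := h0 z (le_trans ht hz)
      rw [dist_zero_right] at this
      exact this.le)
    (convex_Ici t) Set.self_mem_Ici h1
  rw [dist_zero_right]
  refine hb.trans_lt ?_
  rw [Real.norm_eq_abs, abs_of_nonneg (by linarith), div_mul_eq_mul_div, div_lt_iff₀ (by linarith)]
  nlinarith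

lemma exists_interval {τ : ℕ → ℝ} (hτ : Tendsto τ atTop atTop) {K : ℕ} {t : ℝ} (ht : τ K ≤ t) :
    ∃ k, K ≤ k ∧ τ k ≤ t ∧ t < τ (k + 1) := by
  by_contra! hcon
  have hall : ∀ k, K ≤ k → τ k ≤ t := fun k hk => by
    induction k, hk using Nat.le_induction with
    | base => exact ht
    | succ k hk ih => exact hcon k hk ih
  obtain ⟨k, hk, hKk⟩ := ((hτ.eventually_gt_atTop t).and (eventually_ge_atTop K)).exists
  exact absurd (hall k hKk) (not_le.2 hk)

/-! ### Matrices and graphs -/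

/-- Chaining small differences along paths whose edge relation varies with `k`: there are only
finitely many relations on a finite type, so the length of the paths needs no bound. -/
lemma tendsto_of_chain {ι : Type*} [Finite ι] (R : ℕ → ι → ι → Prop) (z : ι → ℕ → ℝ)
    (hedge : ∀ u v, ∀ ε > 0, ∀ᶠ k in atTop, R k u v → |z v k - z u k| < ε)
    (hconn : ∀ k u v, Relation.ReflTransGen (R k) u v) (u v : ι) :
    ∀ ε > 0, ∀ᶠ k in atTop, |z v k - z u k| < ε := by
  have key : ∀ Q : ι → ι → Prop, ∀ w, Relation.ReflTransGen Q u w →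
      ∀ ε > 0, ∀ᶠ k in atTop, R k = Q → |z w k - z u k| < ε := by
    intro Q w hw
    induction hw with
    | refl => intro ε hε; exact Eventually.of_forall fun _ _ => by simpa using hε
    | @tail b c _ hbc ih =>
      intro ε hε
      filter_upwards [ih (ε / 2) (by positivity), hedge b c (ε / 2) (by positivity)]
        with k h1 h2 hk
      have h1' := h1 hk
      have h2' := h2 (by rw [hk]; exact hbc)
      calc |z c k - z u k| = |(z c k - z b k) + (z b k - z u k)| := by ring_nf
        _ ≤ |z c k - z b k| + |z b k - z u k| := abs_add_le _ _
        _ < ε := by linarith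
  intro ε hε
  have : ∀ᶠ k in atTop, ∀ Q : ι → ι → Prop, Relation.ReflTransGen Q u v → R k = Q →
      |z v k - z u k| < ε := by
    rw [eventually_all]
    intro Q
    by_cases hQ : Relation.ReflTransGen Q u v
    · exact (key Q v hQ ε hε).mono fun k hk _ => hk
    · exact Eventually.of_forall fun k h => absurd h hQ
  exact this.mono fun k hk => hk (R k) (hconn k u v) rfl

lemma posDef_coercive {m : ℕ} {A : Matrix (Fin m) (Fin m) ℝ} (hA : A.PosDef) :
    ∃ c > 0, ∀ x : Fin m → ℝ, ∀ a, c * x a ^ 2 ≤ x ⬝ᵥ A *ᵥ x := by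
  rcases Nat.eq_zero_or_pos m with rfl | hm
  · exact ⟨1, one_pos, fun x a => a.elim0⟩
  have : Nonempty (Fin m) := ⟨⟨0, hm⟩⟩
  have hcont : Continuous fun x : Fin m → ℝ => x ⬝ᵥ A *ᵥ x := by
    unfold dotProduct mulVec dotProduct; fun_prop
  obtain ⟨x0, hx0, hmin⟩ := (isCompact_sphere (0 : Fin m → ℝ) 1).exists_isMinOn
    (NormedSpace.sphere_nonempty.2 zero_le_one) hcont.continuousOn
  have hx0' : ‖x0‖ = 1 := by simpa using hx0
  refine ⟨x0 ⬝ᵥ A *ᵥ x0, ?_, fun x a => ?_⟩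
  · have := hA.dotProduct_mulVec_pos (x := x0) (by rintro rfl; simp at hx0')
    simpa using this
  · rcases eq_or_ne x 0 with rfl | hx
    · simp
    have hn : 0 < ‖x‖ := norm_pos_iff.2 hx
    have h1 := hmin (a := ‖x‖⁻¹ • x) (by simp [norm_smul, hn.ne'])
    simp only [Set.mem_ofPred_eq, mulVec_smul, dotProduct_smul, smul_dotProduct,
      smul_eq_mul] at h1
    have hpos : 0 ≤ x0 ⬝ᵥ A *ᵥ x0 := by simpa using hA.posSemidef.dotProduct_mulVec_nonneg x0
    have h2 : x a ^ 2 ≤ ‖x‖ ^ 2 := by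
      have := norm_le_pi_norm x a
      rw [← sq_abs]; gcongr; exact this
    calc x0 ⬝ᵥ A *ᵥ x0 * x a ^ 2 ≤ x0 ⬝ᵥ A *ᵥ x0 * ‖x‖ ^ 2 := by gcongr
      _ ≤ ‖x‖⁻¹ * (‖x‖⁻¹ * x ⬝ᵥ A *ᵥ x) * ‖x‖ ^ 2 := by gcongr
      _ = x ⬝ᵥ A *ᵥ x := by field_simp

lemma quad_lower {m : ℕ} {A : Matrix (Fin m) (Fin m) ℝ} {μ : ℝ}
    (h : (A - μ • 1).PosSemidef) (x : Fin m → ℝ) : μ * (x ⬝ᵥ x) ≤ x ⬝ᵥ A *ᵥ x := by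
  have := h.dotProduct_mulVec_nonneg x
  simp only [star_trivial, sub_mulVec, smul_mulVec, one_mulVec, dotProduct_sub,
    dotProduct_smul, smul_eq_mul] at this
  linarith

lemma quad_upper {m : ℕ} {A : Matrix (Fin m) (Fin m) ℝ} {M : ℝ}
    (h : (M • 1 - A).PosSemidef) (x : Fin m → ℝ) : x ⬝ᵥ A *ᵥ x ≤ M * (x ⬝ᵥ x) := by
  have := h.dotProduct_mulVec_nonneg x
  simp only [star_trivial, sub_mulVec, smul_mulVec, one_mulVec, dotProduct_sub,
    dotProduct_smul, smul_eq_mul] at this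
  linarith

lemma dot_symm {m : ℕ} {A : Matrix (Fin m) (Fin m) ℝ} (h : A.IsSymm) (x y : Fin m → ℝ) :
    x ⬝ᵥ A *ᵥ y = y ⬝ᵥ A *ᵥ x := by
  rw [dotProduct_mulVec, dotProduct_comm, ← mulVec_transpose, h.eq]

lemma dot_self_nonneg {m : ℕ} (x : Fin m → ℝ) : 0 ≤ x ⬝ᵥ x :=
  Finset.sum_nonneg fun _ _ => mul_self_nonneg _

lemma sq_le_dot {m : ℕ} (x : Fin m → ℝ) (a : Fin m) : x a ^ 2 ≤ x ⬝ᵥ x := by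
  rw [sq]
  exact Finset.single_le_sum (f := fun a => x a * x a) (fun i _ => mul_self_nonneg _)
    (Finset.mem_univ a)

/-- Polarisation bounds the entries of a symmetric matrix between `0` and `M I`. -/
lemma entry_bound {m : ℕ} {A : Matrix (Fin m) (Fin m) ℝ} {μ M : ℝ} (hμ : 0 < μ)
    (hs : A.IsSymm) (hl : (A - μ • 1).PosSemidef) (hu : (M • 1 - A).PosSemidef) (a b : Fin m) :
    |A a b| ≤ M := by
  let x : Fin m → ℝ := Pi.single a 1
  let y : Fin m → ℝ := Pi.single b 1
  have hxy : x ⬝ᵥ A *ᵥ y = A a b := by simp [x, y]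
  have hyx : y ⬝ᵥ A *ᵥ x = A a b := by rw [dot_symm hs, hxy]
  have hxx : x ⬝ᵥ x = 1 := by simp [x]
  have hyy : y ⬝ᵥ y = 1 := by simp [y]
  have nonneg : ∀ z : Fin m → ℝ, 0 ≤ z ⬝ᵥ A *ᵥ z := fun z =>
    (mul_nonneg hμ.le (dot_self_nonneg z)).trans (quad_lower hl z)
  have h1 := nonneg (x + y)
  have h2 := nonneg (x - y)
  have h3 := quad_upper hu x
  have h4 := quad_upper hu y
  simp only [mulVec_add, mulVec_sub, dotProduct_add, dotProduct_sub, add_dotProduct,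
    sub_dotProduct, hxy, hyx, hxx, hyy] at h1 h2 h3 h4
  rw [abs_le]
  constructor <;> linarith

lemma hasDeriv_mulVec {p q : ℕ} {A : ℝ → Matrix (Fin p) (Fin q) ℝ} {A' : Matrix (Fin p) (Fin q) ℝ}
    {x : ℝ → Fin q → ℝ} {x' : Fin q → ℝ} {S : Set ℝ} {t : ℝ}
    (hA : ∀ a b, HasDerivWithinAt (fun τ => A τ a b) (A' a b) S t)
    (hx : HasDerivWithinAt x x' S t) :
    HasDerivWithinAt (fun τ => A τ *ᵥ x τ) (A' *ᵥ x t + A t *ᵥ x') S t := by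
  rw [hasDerivWithinAt_pi] at hx ⊢
  intro a
  have := HasDerivWithinAt.fun_sum (u := Finset.univ) fun b _ => (hA a b).fun_mul (hx b)
  rw [Finset.sum_add_distrib] at this
  exact this

lemma hasDeriv_dot {q : ℕ} {x y : ℝ → Fin q → ℝ} {x' y' : Fin q → ℝ} {S : Set ℝ} {t : ℝ}
    (hx : HasDerivWithinAt x x' S t) (hy : HasDerivWithinAt y y' S t) :
    HasDerivWithinAt (fun τ => x τ ⬝ᵥ y τ) (x' ⬝ᵥ y t + x t ⬝ᵥ y') S t := by
  rw [hasDerivWithinAt_pi] at hx hy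
  have := HasDerivWithinAt.fun_sum (u := Finset.univ) fun b _ => (hx b).fun_mul (hy b)
  rw [Finset.sum_add_distrib] at this
  exact this

/-- Pairing the two orientations of every edge turns the coupling terms into a negative sum of
quadratic forms in the differences of neighbouring states. -/
lemma coupling_symm {n m : ℕ} (N : Fin n → Finset (Fin n)) (hN : ∀ i j, j ∈ N i ↔ i ∈ N j)
    (K : Fin n → Fin n → Matrix (Fin m) (Fin m) ℝ) (hK : ∀ i j, K i j = K j i)
    (z : Fin n → Fin m → ℝ) :
    2 * ∑ i, z i ⬝ᵥ ∑ j ∈ N i, K i j *ᵥ (z j - z i) =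
      -∑ i, ∑ j ∈ N i, (z j - z i) ⬝ᵥ K i j *ᵥ (z j - z i) := by
  have e : ∀ i, z i ⬝ᵥ ∑ j ∈ N i, K i j *ᵥ (z j - z i) =
      ∑ j, if j ∈ N i then z i ⬝ᵥ K i j *ᵥ (z j - z i) else 0 := fun i => by
    rw [dotProduct_sum, ← Finset.sum_filter]
    simp
  have e' : ∀ i, ∑ j ∈ N i, (z j - z i) ⬝ᵥ K i j *ᵥ (z j - z i) =
      ∑ j, if j ∈ N i then (z j - z i) ⬝ᵥ K i j *ᵥ (z j - z i) else 0 := fun i => by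
    rw [← Finset.sum_filter]
    simp
  simp_rw [e, e']
  rw [two_mul]
  nth_rewrite 2 [Finset.sum_comm]
  rw [← Finset.sum_add_distrib, ← Finset.sum_neg_distrib]
  refine Finset.sum_congr rfl fun i _ => ?_
  rw [← Finset.sum_add_distrib, ← Finset.sum_neg_distrib]
  refine Finset.sum_congr rfl fun j _ => ?_
  by_cases h : j ∈ N i
  · rw [if_pos h, if_pos ((hN i j).1 h), if_pos h, hK j i]
    simp only [mulVec_sub, dotProduct_sub, sub_dotProduct]
    ring
  · rw [if_neg h, if_neg (fun h' => h ((hN i j).2 h')), if_neg h]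
    simp

/-- Persistency of excitation, tested on a fixed vector that every regressor nearly annihilates
over the window. -/
lemma pe_bound {n p m : ℕ} {Y : Fin n → ℝ → Matrix (Fin p) (Fin m) ℝ} {T α ε t : ℝ} (hT : 0 < T)
    (hPE : CollPEWith Y T α) (hYc : ∀ i a b, ContinuousOn (fun τ => Y i τ a b) (Set.Ici 0))
    (ht : 0 ≤ t) (x : Fin m → ℝ)
    (hx : ∀ τ, t ≤ τ → τ ≤ t + T → ∀ i r, |(Y i τ *ᵥ x) r| ≤ ε) :
    α * (x ⬝ᵥ x) ≤ n * (p * ε ^ 2) := by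
  have h := quad_lower (hPE t ht) x
  have htT : t ≤ t + T := by linarith
  have hc : ∀ i a b, ContinuousOn (fun τ => ((Y i τ)ᵀ * Y i τ) a b) (Set.uIcc t (t + T)) := by
    intro i a b
    have hsub : Set.uIcc t (t + T) ⊆ Set.Ici 0 := by
      rw [Set.uIcc_of_le htT]; exact fun z hz => ht.trans hz.1
    simp only [Matrix.mul_apply, transpose_apply]
    exact continuousOn_finsetSum _ fun r _ => ((hYc i r a).mono hsub).mul ((hYc i r b).mono hsub)
  have hgram : ∀ i, x ⬝ᵥ gramInt (Y i) t T *ᵥ x ≤ T * (p * ε ^ 2) := by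
    intro i
    have e1 : x ⬝ᵥ gramInt (Y i) t T *ᵥ x =
        ∫ τ in t..(t + T), ∑ a, ∑ b, x a * (((Y i τ)ᵀ * Y i τ) a b * x b) := by
      have hci : ∀ a b, ContinuousOn (fun τ => x a * (((Y i τ)ᵀ * Y i τ) a b * x b))
          (Set.uIcc t (t + T)) := fun a b =>
        continuousOn_const.mul ((hc i a b).mul continuousOn_const)
      rw [intervalIntegral.integral_finsetSum fun a _ =>
        (continuousOn_finsetSum _ fun b _ => hci a b).intervalIntegrable]
      simp only [dotProduct, mulVec, gramInt, of_apply, Finset.mul_sum]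
      refine Finset.sum_congr rfl fun a _ => ?_
      rw [intervalIntegral.integral_finsetSum fun b _ => (hci a b).intervalIntegrable]
      refine Finset.sum_congr rfl fun b _ => ?_
      rw [intervalIntegral.integral_const_mul, intervalIntegral.integral_mul_const]
    have e2 : ∀ τ, ∑ a, ∑ b, x a * (((Y i τ)ᵀ * Y i τ) a b * x b) =
        (Y i τ *ᵥ x) ⬝ᵥ (Y i τ *ᵥ x) := by
      intro τ
      have : (Y i τ *ᵥ x) ⬝ᵥ (Y i τ *ᵥ x) = x ⬝ᵥ ((Y i τ)ᵀ * Y i τ) *ᵥ x := by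
        rw [← mulVec_mulVec, dotProduct_mulVec x, ← mulVec_transpose, transpose_transpose]
      rw [this]
      simp only [dotProduct, mulVec, Finset.mul_sum]
    rw [e1]
    refine (le_abs_self _).trans ?_
    rw [← Real.norm_eq_abs]
    refine (intervalIntegral.norm_integral_le_of_norm_le_const (C := p * ε ^ 2) ?_).trans ?_
    · intro τ hτ
      rw [Set.uIoc_of_le htT] at hτ
      rw [e2, Real.norm_of_nonneg (dot_self_nonneg _)]
      calc (Y i τ *ᵥ x) ⬝ᵥ (Y i τ *ᵥ x) ≤ ∑ _r : Fin p, ε ^ 2 := by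
            refine Finset.sum_le_sum fun r _ => ?_
            rw [← sq, ← sq_abs]
            have := hx τ hτ.1.le hτ.2 i r
            gcongr
        _ = p * ε ^ 2 := by simp
    · rw [add_sub_cancel_left, abs_of_pos hT, mul_comm]
  have hsum : x ⬝ᵥ (T⁻¹ • ∑ i, gramInt (Y i) t T) *ᵥ x =
      T⁻¹ * ∑ i, x ⬝ᵥ gramInt (Y i) t T *ᵥ x := by
    rw [smul_mulVec, dotProduct_smul, sum_mulVec, dotProduct_sum, smul_eq_mul]
  rw [hsum] at h
  refine h.trans ?_
  calc T⁻¹ * ∑ i, x ⬝ᵥ gramInt (Y i) t T *ᵥ x ≤ T⁻¹ * ∑ _i : Fin n, T * (p * ε ^ 2) := by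
        gcongr with i _; exact hgram i
    _ = n * (p * ε ^ 2) := by
        simp only [Finset.sum_const, Finset.card_univ, Fintype.card_fin, nsmul_eq_mul]
        field_simp

lemma BddPos.mulVec {p q : ℕ} {A : ℝ → Matrix (Fin p) (Fin q) ℝ} {x : ℝ → Fin q → ℝ}
    (hA : ∀ a b, BddPos fun t => A t a b) (hx : ∀ b, BddPos fun t => x t b) (a : Fin p) :
    BddPos fun t => (A t *ᵥ x t) a :=
  BddPos.sum Finset.univ fun b => (hA a b).mul (hx b)

lemma tendsto_sum_zero {β ι : Type*} {l : Filter β} (u : Finset ι) {f : ι → β → ℝ}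
    (hf : ∀ i, Tendsto (f i) l (𝓝 0)) : Tendsto (fun b => ∑ i ∈ u, f i b) l (𝓝 0) := by
  simpa using tendsto_finsetSum u fun i _ => hf i

lemma mulVec_tendsto {p q : ℕ} {β : Type*} {l : Filter β} {u : β → ℝ}
    {A : ℝ → Matrix (Fin p) (Fin q) ℝ} {x : β → Fin q → ℝ}
    (hA : ∀ a b, BddPos fun t => A t a b) (hu : Tendsto u l atTop)
    (hx : ∀ b, Tendsto (fun t => x t b) l (𝓝 0)) (a : Fin p) :
    Tendsto (fun t => (A (u t) *ᵥ x t) a) l (𝓝 0) :=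
  tendsto_sum_zero Finset.univ fun b => (hA a b).mul_tendsto hu (hx b)

/-! ### Convergence of the parameter errors -/

/-- Theorem 4 of the paper: multi-robot direct adaptive control with
time-varying network topologies.  With switching times `tsw 0 = 0 < tsw 1 < …` separated
by at least `td`, piecewise-constant symmetric neighbor sets `N i t`, symmetric positive
definite gains `K i j = K j i`, and uniformly bounded intervals over which the union of
the communication graphs is connected, collective persistency of excitation of
`{Y_1, …, Y_n}` implies every parameter error `ã_i → 0` as `t → ∞`. -/
theorem time_varying_topology_parameter_convergence (n nj m : ℕ) (hn : 1 ≤ n)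
    (H C : Fin n → ℝ → Matrix (Fin nj) (Fin nj) ℝ)
    (KD : Fin n → Matrix (Fin nj) (Fin nj) ℝ)
    (Y dY : Fin n → ℝ → Matrix (Fin nj) (Fin m) ℝ)
    (Pm : Fin n → Matrix (Fin m) (Fin m) ℝ)
    (μ M : ℝ) (hμ : 0 < μ) (hμM : μ ≤ M)
    (s ds : Fin n → ℝ → Fin nj → ℝ) (at' : Fin n → ℝ → Fin m → ℝ)
    -- switching times, spaced at least `td` apart and tending to infinity
    (tsw : ℕ → ℝ) (td : ℝ) (htd : 0 < td) (htsw0 : tsw 0 = 0)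
    (htsw : ∀ j, tsw j + td ≤ tsw (j + 1))
    (htop : Tendsto tsw atTop atTop)
    -- time-varying neighbor sets: loopless, symmetric, constant on each switching interval
    (N : Fin n → ℝ → Finset (Fin n))
    (hNloop : ∀ i t, i ∉ N i t)
    (hNsymm : ∀ i j t, j ∈ N i t ↔ i ∈ N j t)
    (hNconst : ∀ j : ℕ, ∀ t ∈ Set.Ico (tsw j) (tsw (j + 1)), ∀ i, N i t = N i (tsw j))
    -- constant symmetric positive definite coupling gains for each unordered pair
    (K : Fin n → Fin n → Matrix (Fin m) (Fin m) ℝ)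
    (hKsymm : ∀ i j, K i j = K j i)
    (hKpd : ∀ i j, (K i j).PosDef)
    -- infinitely many uniformly bounded intervals over which the union graph is connected
    (idx : ℕ → ℕ) (hidx : StrictMono idx) (B : ℝ) (hB : 0 < B)
    (hBd : ∀ k, tsw (idx (k + 1)) - tsw (idx k) ≤ B)
    (hconn : ∀ k, ∀ a b : Fin n,
      Relation.ReflTransGen
        (fun u v => ∃ τ ∈ Set.Ico (tsw (idx k)) (tsw (idx (k + 1))), v ∈ N u τ) a b)
    -- each `H i t` symmetric with `μ I ⪯ H i t ⪯ M I`, continuously differentiable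
    (hHsymm : ∀ i t, 0 ≤ t → (H i t).IsSymm)
    (hHlb : ∀ i t, 0 ≤ t → (H i t - μ • 1).PosSemidef)
    (hHub : ∀ i t, 0 ≤ t → ((M • 1 : Matrix (Fin nj) (Fin nj) ℝ) - H i t).PosSemidef)
    (hHd : ∀ i, ∀ t, 0 ≤ t → ∀ a b,
      HasDerivWithinAt (fun τ => H i τ a b) ((C i t + (C i t)ᵀ) a b) (Set.Ici 0) t)
    -- each `C i` continuous and bounded
    (hCc : ∀ i a b, ContinuousOn (fun t => C i t a b) (Set.Ici 0))
    (hCbd : ∃ c, ∀ i, ∀ t, 0 ≤ t → ∀ a b, |C i t a b| ≤ c)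
    -- the gains are symmetric positive definite
    (hKD : ∀ i, (KD i).PosDef) (hPm : ∀ i, (Pm i).PosDef)
    -- each `Y i` continuously differentiable with `Y i` and `Y i '` bounded
    (hYd : ∀ i, ∀ t, 0 ≤ t → ∀ a b,
      HasDerivWithinAt (fun τ => Y i τ a b) (dY i t a b) (Set.Ici 0) t)
    (hdYc : ∀ i a b, ContinuousOn (fun t => dY i t a b) (Set.Ici 0))
    (hYbd : ∃ c, ∀ i, ∀ t, 0 ≤ t → ∀ a b, |Y i t a b| ≤ c ∧ |dY i t a b| ≤ c)
    -- closed-loop dynamics and decentralized update law over the time-varying network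
    (hs : ∀ i, ∀ t, 0 ≤ t → HasDerivWithinAt (s i) (ds i t) (Set.Ici 0) t)
    (hdyn : ∀ i, ∀ t, 0 ≤ t →
      H i t *ᵥ ds i t + (C i t + KD i) *ᵥ s i t = Y i t *ᵥ at' i t)
    (hat : ∀ i, ∀ t, 0 ≤ t →
      HasDerivWithinAt (at' i)
        (-(Pm i *ᵥ ((Y i t)ᵀ *ᵥ s i t -
          ∑ j ∈ N i t, K i j *ᵥ (at' j t - at' i t)))) (Set.Ici 0) t)
    -- collective persistency of excitation
    (hPE : ∃ T > (0:ℝ), ∃ α > (0:ℝ), CollPEWith Y T α) :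
    ∀ i, Tendsto (at' i) atTop (𝓝 0) := by
  obtain ⟨T, hT, α, hα, hPE⟩ := hPE
  obtain ⟨cC, hcC⟩ := hCbd
  obtain ⟨cY, hcY⟩ := hYbd
  -- `D` is the parameter velocity and `U` the coupling term inside it
  let U : Fin n → ℝ → Fin m → ℝ := fun i t => ∑ j ∈ N i t, K i j *ᵥ (at' j t - at' i t)
  let D : Fin n → ℝ → Fin m → ℝ := fun i t => -(Pm i *ᵥ ((Y i t)ᵀ *ᵥ s i t - U i t))
  have hatD : ∀ i, ∀ t, 0 ≤ t → HasDerivWithinAt (at' i) (D i t) (Set.Ici 0) t := hat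
  have hPsymm : ∀ i, ((Pm i)⁻¹).IsSymm := fun i => by
    have := (hPm i).inv.isHermitian
    rwa [IsHermitian, conjTranspose_eq_transpose_of_trivial] at this
  let V : ℝ → ℝ := fun t => ∑ i, (s i t ⬝ᵥ H i t *ᵥ s i t + at' i t ⬝ᵥ (Pm i)⁻¹ *ᵥ at' i t)
  let V' : ℝ → ℝ := fun t => -(2 * ∑ i, s i t ⬝ᵥ KD i *ᵥ s i t +
    ∑ i, ∑ j ∈ N i t, (at' j t - at' i t) ⬝ᵥ K i j *ᵥ (at' j t - at' i t))
  have hV : ∀ t, 0 ≤ t → HasDerivWithinAt V (V' t) (Set.Ici 0) t := by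
    intro t ht
    have hrobot : ∀ i, HasDerivWithinAt
        (fun t => s i t ⬝ᵥ H i t *ᵥ s i t + at' i t ⬝ᵥ (Pm i)⁻¹ *ᵥ at' i t)
        (-(2 * (s i t ⬝ᵥ KD i *ᵥ s i t)) + 2 * (at' i t ⬝ᵥ U i t)) (Set.Ici 0) t := by
      intro i
      have d1 := hasDeriv_dot (hs i t ht) (hasDeriv_mulVec (hHd i t ht) (hs i t ht))
      have d2 := hasDeriv_dot (hatD i t ht) (hasDeriv_mulVec (A := fun _ => (Pm i)⁻¹) (A' := 0)
        (fun a b => hasDerivWithinAt_const _ _ _) (hatD i t ht))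
      refine (d1.fun_add d2).congr_deriv ?_
      have e1 : ds i t ⬝ᵥ H i t *ᵥ s i t = s i t ⬝ᵥ H i t *ᵥ ds i t :=
        dot_symm (hHsymm i t ht) _ _
      have e2 : s i t ⬝ᵥ (C i t)ᵀ *ᵥ s i t = s i t ⬝ᵥ C i t *ᵥ s i t := by
        rw [mulVec_transpose, dotProduct_comm, dotProduct_mulVec]
      have e3 := congrArg (fun w => s i t ⬝ᵥ w) (hdyn i t ht)
      simp only [add_mulVec, dotProduct_add] at e3
      have e4 : D i t ⬝ᵥ (Pm i)⁻¹ *ᵥ at' i t = at' i t ⬝ᵥ (Pm i)⁻¹ *ᵥ D i t :=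
        dot_symm (hPsymm i) _ _
      have e5 : (Pm i)⁻¹ *ᵥ D i t = -((Y i t)ᵀ *ᵥ s i t - U i t) := by
        simp only [D]
        rw [mulVec_neg, mulVec_mulVec, nonsing_inv_mul _
          ((isUnit_iff_isUnit_det _).1 (hPm i).isUnit), one_mulVec]
      have e6 : at' i t ⬝ᵥ (Y i t)ᵀ *ᵥ s i t = s i t ⬝ᵥ Y i t *ᵥ at' i t := by
        rw [mulVec_transpose, dotProduct_comm, dotProduct_mulVec]
      rw [e4, e5, e1]
      simp only [add_mulVec, dotProduct_add, zero_mulVec, dotProduct_zero, e2,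
        dotProduct_neg, dotProduct_sub, e6]
      linarith
    refine (HasDerivWithinAt.fun_sum (u := Finset.univ) fun i _ => hrobot i).congr_deriv ?_
    have e := coupling_symm (fun i => N i t) (fun i j => hNsymm i j t) K hKsymm (fun i => at' i t)
    simp only [V', U]
    rw [Finset.sum_add_distrib, Finset.sum_neg_distrib, ← Finset.mul_sum, ← Finset.mul_sum, e]
    ring
  have hqs : ∀ i t, 0 ≤ t → 0 ≤ s i t ⬝ᵥ H i t *ᵥ s i t := fun i t ht =>
    (mul_nonneg hμ.le (dot_self_nonneg _)).trans (quad_lower (hHlb i t ht) _)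
  have hqa : ∀ i t, 0 ≤ at' i t ⬝ᵥ (Pm i)⁻¹ *ᵥ at' i t := fun i t => by
    simpa using (hPm i).inv.posSemidef.dotProduct_mulVec_nonneg (at' i t)
  have hqK : ∀ i j t, 0 ≤ (at' j t - at' i t) ⬝ᵥ K i j *ᵥ (at' j t - at' i t) := fun i j t => by
    simpa using (hKpd i j).posSemidef.dotProduct_mulVec_nonneg (at' j t - at' i t)
  have hqD : ∀ i t, 0 ≤ s i t ⬝ᵥ KD i *ᵥ s i t := fun i t => by
    simpa using (hKD i).posSemidef.dotProduct_mulVec_nonneg (s i t)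
  have hV0 : ∀ t, 0 ≤ t → 0 ≤ V t := fun t ht =>
    Finset.sum_nonneg fun i _ => add_nonneg (hqs i t ht) (hqa i t)
  have hV's : ∀ i t, V' t ≤ -(s i t ⬝ᵥ KD i *ᵥ s i t) := fun i t => by
    have h1 := Finset.single_le_sum (f := fun i => s i t ⬝ᵥ KD i *ᵥ s i t)
      (fun i _ => hqD i t) (Finset.mem_univ i)
    have h2 := Finset.sum_nonneg fun i (_ : i ∈ Finset.univ) =>
      Finset.sum_nonneg fun j (_ : j ∈ N i t) => hqK i j t
    have h3 := hqD i t
    simp only [V']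
    linarith
  have hV'e : ∀ i j t, j ∈ N i t →
      V' t ≤ -((at' j t - at' i t) ⬝ᵥ K i j *ᵥ (at' j t - at' i t)) := fun i j t hj => by
    have h1 := Finset.sum_nonneg fun i (_ : i ∈ Finset.univ) => hqD i t
    have h2 := Finset.single_le_sum
      (f := fun i => ∑ j ∈ N i t, (at' j t - at' i t) ⬝ᵥ K i j *ᵥ (at' j t - at' i t))
      (fun i _ => Finset.sum_nonneg fun j _ => hqK i j t) (Finset.mem_univ i)
    have h3 := Finset.single_le_sum
      (f := fun j => (at' j t - at' i t) ⬝ᵥ K i j *ᵥ (at' j t - at' i t))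
      (fun j _ => hqK i j t) hj
    simp only [V']
    linarith
  have hV' : ∀ t, 0 ≤ t → V' t ≤ 0 := fun t _ => by
    have h1 := Finset.sum_nonneg fun i (_ : i ∈ Finset.univ) => hqD i t
    have h2 := Finset.sum_nonneg fun i (_ : i ∈ Finset.univ) =>
      Finset.sum_nonneg fun j (_ : j ∈ N i t) => hqK i j t
    simp only [V']
    linarith
  have hVle : ∀ t, 0 ≤ t → V t ≤ V 0 := fun t ht => by
    have := le_of_deriv_le hV le_rfl ht (k := 0) fun τ hτ => hV' τ hτ.1.le
    linarith
  have hVi : ∀ i t, 0 ≤ t →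
      s i t ⬝ᵥ H i t *ᵥ s i t + at' i t ⬝ᵥ (Pm i)⁻¹ *ᵥ at' i t ≤ V 0 := fun i t ht =>
    (Finset.single_le_sum
      (f := fun i => s i t ⬝ᵥ H i t *ᵥ s i t + at' i t ⬝ᵥ (Pm i)⁻¹ *ᵥ at' i t)
      (fun i _ => add_nonneg (hqs i t ht) (hqa i t)) (Finset.mem_univ i)).trans (hVle t ht)
  have hsB : ∀ i a, BddPos fun t => s i t a := fun i a =>
    BddPos.of_sq_le (c := V 0 / μ) fun t ht => by
      rw [le_div_iff₀' hμ]
      have h1 := mul_le_mul_of_nonneg_left (sq_le_dot (s i t) a) hμ.le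
      have h2 := quad_lower (hHlb i t ht) (s i t)
      have h3 := hVi i t ht
      have h4 := hqa i t
      linarith
  have haB : ∀ i a, BddPos fun t => at' i t a := fun i a => by
    obtain ⟨c, hc, h⟩ := posDef_coercive (hPm i).inv
    refine BddPos.of_sq_le (c := V 0 / c) fun t ht => ?_
    rw [le_div_iff₀' hc]
    have h1 := h (at' i t) a
    have h3 := hVi i t ht
    have h4 := hqs i t ht
    linarith
  have hYB : ∀ i a b, BddPos fun t => Y i t a b := fun i a b =>
    ⟨cY, fun t ht => (hcY i t ht a b).1⟩
  have hdYB : ∀ i a b, BddPos fun t => dY i t a b := fun i a b =>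
    ⟨cY, fun t ht => (hcY i t ht a b).2⟩
  have hCB : ∀ i a b, BddPos fun t => C i t a b := fun i a b => ⟨cC, fun t ht => hcC i t ht a b⟩
  have hHB : ∀ i a b, BddPos fun t => H i t a b := fun i a b => ⟨M, fun t ht =>
    entry_bound hμ (hHsymm i t ht) (hHlb i t ht) (hHub i t ht) a b⟩
  -- `ds` is bounded because `H i t` is uniformly positive definite
  have hdsB : ∀ i a, BddPos fun t => ds i t a := by
    intro i a
    let w : ℝ → Fin nj → ℝ := fun t => Y i t *ᵥ at' i t - (C i t + KD i) *ᵥ s i t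
    have hw : ∀ r, BddPos fun t => w t r := fun r =>
      (BddPos.mulVec (hYB i) (haB i) r).sub
        (BddPos.mulVec (fun a b => (hCB i a b).add (BddPos.const (KD i a b))) (hsB i) r)
    obtain ⟨c, hc⟩ := BddPos.sum Finset.univ fun r => (hw r).mul (hw r)
    refine BddPos.of_sq_le (c := c / μ ^ 2) fun t ht => ?_
    rw [le_div_iff₀' (by positivity)]
    have hH : H i t *ᵥ ds i t = w t := eq_sub_of_add_eq (hdyn i t ht)
    have h1 := quad_lower (hHlb i t ht) (ds i t)
    rw [hH] at h1
    have h2 := dot_self_nonneg (μ • ds i t - w t)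
    simp only [dotProduct_sub, sub_dotProduct, smul_dotProduct, dotProduct_smul, smul_eq_mul,
      dotProduct_comm (w t) (ds i t)] at h2
    have h3 : w t ⬝ᵥ w t ≤ c := (le_abs_self _).trans (hc t ht)
    have h4 := mul_le_mul_of_nonneg_left (sq_le_dot (ds i t) a) (sq_nonneg μ)
    have h5 := mul_le_mul_of_nonneg_left h1 hμ.le
    linarith
  have hUeq : ∀ i t b, U i t b =
      ∑ j, ∑ a, K i j b a * (if j ∈ N i t then at' j t a - at' i t a else 0) := fun i t b => by
    simp only [U, Finset.sum_apply]
    rw [← Finset.sum_subset (Finset.subset_univ (N i t))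
      (fun j _ hj => Finset.sum_eq_zero fun a _ => by rw [if_neg hj, mul_zero])]
    refine Finset.sum_congr rfl fun j hj => ?_
    simp only [if_pos hj]
    rfl
  have hUB : ∀ i b, BddPos fun t => U i t b := fun i b => by
    simp only [hUeq]
    exact BddPos.sum _ fun j => BddPos.sum _ fun a =>
      (BddPos.const (K i j b a)).mul (BddPos.ite ((haB j a).sub (haB i a)))
  have hDB : ∀ i a, BddPos fun t => D i t a := fun i a =>
    (BddPos.mulVec (fun a b => BddPos.const (Pm i a b)) (fun b =>
      (BddPos.mulVec (fun a b => hYB i b a) (hsB i) b).sub (hUB i b)) a).neg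
  have hsd : ∀ i a t, 0 ≤ t →
      HasDerivWithinAt (fun t => s i t a) (ds i t a) (Set.Ici 0) t :=
    fun i a t ht => hasDerivWithinAt_pi.1 (hs i t ht) a
  have had : ∀ i a t, 0 ≤ t →
      HasDerivWithinAt (fun t => at' i t a) (D i t a) (Set.Ici 0) t :=
    fun i a t ht => hasDerivWithinAt_pi.1 (hatD i t ht) a
  have hslim : ∀ i a, Tendsto (fun t => s i t a) atTop (𝓝 0) := by
    intro i a
    obtain ⟨c, hc, hcq⟩ := posDef_coercive (hKD i)
    obtain ⟨L, hL0, hL⟩ := (hdsB i a).lipschitz (hsd i a)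
    rw [Metric.tendsto_nhds]
    intro ε hε
    have := small_of_dissipation hV hV0 hV' (fun _ => True) hc one_pos hL0 hL
      (fun t ht _ => ⟨t, t + 1, ht, le_rfl, le_rfl, by linarith, fun τ _ =>
        (hV's i τ).trans (neg_le_neg (hcq _ a))⟩) ε hε
    filter_upwards [this] with t ht
    rw [Real.dist_eq, sub_zero]
    exact ht trivial
  have htsw_nonneg : ∀ k, 0 ≤ tsw k := fun k => by
    induction k with
    | zero => exact htsw0.ge
    | succ k ih => linarith [htsw k]
  have hedge : ∀ i j a, ∀ ε > 0, ∀ᶠ t in atTop, j ∈ N i t → |at' j t a - at' i t a| < ε := by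
    intro i j a
    obtain ⟨c, hc, hcq⟩ := posDef_coercive (hKpd i j)
    obtain ⟨L, hL0, hL⟩ := ((hDB j a).sub (hDB i a)).lipschitz
      (fun t ht => (had j a t ht).fun_sub (had i a t ht))
    refine small_of_dissipation hV hV0 hV' (fun t => j ∈ N i t) hc htd hL0 hL ?_
    intro t ht hjt
    obtain ⟨k, -, hk1, hk2⟩ := exists_interval htop (K := 0) (htsw0.trans_le ht)
    refine ⟨tsw k, tsw (k + 1), htsw_nonneg k, htsw k, hk1, hk2, fun τ hτ => ?_⟩
    have hjτ : j ∈ N i τ := by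
      rw [hNconst k τ hτ i, ← hNconst k t ⟨hk1, hk2⟩ i]
      exact hjt
    exact (hV'e i j τ hjτ).trans (neg_le_neg (hcq (at' j τ - at' i τ) a))
  have hUlim : ∀ i b, Tendsto (fun t => U i t b) atTop (𝓝 0) := by
    intro i b
    simp only [hUeq]
    refine tendsto_sum_zero _ fun j => tendsto_sum_zero _ fun a => ?_
    refine (BddPos.const (K i j b a)).mul_tendsto tendsto_id ?_
    rw [Metric.tendsto_nhds]
    intro ε hε
    filter_upwards [hedge i j a ε hε] with t ht
    rw [Real.dist_eq, sub_zero]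
    split_ifs with h
    · exact ht h
    · simpa using hε
  have hDlim : ∀ i a, Tendsto (fun t => D i t a) atTop (𝓝 0) := by
    intro i a
    have h1 : ∀ b, Tendsto (fun t => ((Y i t)ᵀ *ᵥ s i t) b - U i t b) atTop (𝓝 0) := fun b => by
      have := (mulVec_tendsto (A := fun t => (Y i t)ᵀ) (fun a b => hYB i b a) tendsto_id
        (hslim i) b).sub (hUlim i b)
      simpa using this
    have h2 := (mulVec_tendsto (A := fun _ => Pm i) (fun a b => BddPos.const (Pm i a b))
      tendsto_id h1 a).neg
    rw [neg_zero] at h2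
    exact h2
  have hYa : ∀ i r, Tendsto (fun t => (Y i t *ᵥ at' i t) r) atTop (𝓝 0) := by
    intro i r
    obtain ⟨L, hL0, hL⟩ := BddPos.lipschitz
      (f := fun t => (Y i t *ᵥ at' i t) r) (f' := fun t => (dY i t *ᵥ at' i t + Y i t *ᵥ D i t) r)
      ((BddPos.mulVec (hdYB i) (haB i) r).add (BddPos.mulVec (hYB i) (hDB i) r))
      (fun t ht => hasDerivWithinAt_pi.1 (hasDeriv_mulVec (hYd i t ht) (hatD i t ht)) r)
    -- the derivative of `H s` is `Y ã + (Cᵀ - K_D) s`, and its last term tends to zero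
    refine barbalat (g := fun t => (H i t *ᵥ s i t) r)
      (r := fun t => ((C i t)ᵀ *ᵥ s i t) r - (KD i *ᵥ s i t) r) hL0 (fun t ht => ?_)
      (mulVec_tendsto (hHB i) tendsto_id (hslim i) r) ?_ hL
    · refine (hasDerivWithinAt_pi.1 (hasDeriv_mulVec (hHd i t ht) (hs i t ht)) r).congr_deriv ?_
      have := congrFun (hdyn i t ht) r
      simp only [add_mulVec, Pi.add_apply] at this ⊢
      linarith
    · have := (mulVec_tendsto (A := fun t => (C i t)ᵀ) (fun a b => hCB i b a) tendsto_id
        (hslim i) r).sub (mulVec_tendsto (A := fun _ => KD i)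
          (fun a b => BddPos.const (KD i a b)) tendsto_id (hslim i) r)
      simpa using this
  have hcons : ∀ u v a, Tendsto (fun t => at' v t a - at' u t a) atTop (𝓝 0) := by
    intro u v a
    have hτ : Tendsto (fun k => tsw (idx k)) atTop atTop := htop.comp hidx.tendsto_atTop
    have hslow : ∀ u v, ∀ ε > 0, ∀ᶠ t in atTop, ∀ τ, t ≤ τ → τ ≤ t + B →
        |(at' v τ a - at' u τ a) - (at' v t a - at' u t a)| < ε := fun u v ε hε => by
      have := (Metric.tendsto_nhds.1 (win_slow hB.le
        (fun t ht => (had v a t ht).fun_sub (had u a t ht))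
        (by simpa using (hDlim v a).sub (hDlim u a)))) ε hε
      simp only [Real.dist_eq, sub_zero] at this
      exact win_unif this
    have hk := tendsto_of_chain
      (fun k u v => ∃ τ ∈ Set.Ico (tsw (idx k)) (tsw (idx (k + 1))), v ∈ N u τ)
      (fun v k => at' v (tsw (idx k)) a) (fun u v ε hε => by
        filter_upwards [hτ.eventually (eventually_forall_ge_atTop.2 (hedge u v a (ε / 2) (half_pos hε))),
          hτ.eventually (hslow u v (ε / 2) (half_pos hε))] with k h1 h2
        rintro ⟨τ, hτk, hN⟩
        have b1 := abs_lt.1 (h1 τ hτk.1 hN)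
        have b2 := abs_lt.1 (h2 τ hτk.1 (by linarith [hBd k, hτk.2]))
        rw [abs_lt]
        constructor <;> linarith [b1.1, b1.2, b2.1, b2.2]) hconn u v
    rw [Metric.tendsto_nhds]
    intro ε hε
    obtain ⟨K0, hK0⟩ := eventually_atTop.1 ((hk (ε / 2) (half_pos hε)).and
      (hτ.eventually (hslow u v (ε / 2) (half_pos hε))))
    filter_upwards [eventually_ge_atTop (tsw (idx K0))] with t ht
    obtain ⟨k, hkK, hk1, hk2⟩ := exists_interval hτ ht
    obtain ⟨h1, h2⟩ := hK0 k hkK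
    have b1 := abs_lt.1 h1
    have b2 := abs_lt.1 (h2 t hk1 (by linarith [hBd k]))
    rw [Real.dist_eq, sub_zero, abs_lt]
    constructor <;> linarith [b1.1, b1.2, b2.1, b2.2]
  intro i0
  -- over a sliding window every regressor nearly annihilates the frozen value of `ã_{i0}`
  have hfrozen : ∀ i r, Tendsto (fun p : ℝ × ℝ => (Y i p.2 *ᵥ at' i0 p.1) r) (win T) (𝓝 0) := by
    intro i r
    have h1 := (hYa i r).comp (win_snd T)
    have h2 : ∀ b, Tendsto (fun p : ℝ × ℝ => (at' i0 p.1 b - at' i p.1 b) -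
        (at' i p.2 b - at' i p.1 b)) (win T) (𝓝 0) := fun b => by
      have := ((hcons i i0 b).comp (win_fst T)).sub (win_slow hT.le (had i b) (hDlim i b))
      simpa using this
    have h3 := h1.add (mulVec_tendsto (hYB i) (win_snd T) h2 r)
    rw [add_zero] at h3
    refine h3.congr fun p => ?_
    have : (fun b => (at' i0 p.1 b - at' i p.1 b) - (at' i p.2 b - at' i p.1 b)) =
        at' i0 p.1 - at' i p.2 := by
      ext b; simp
    simp only [Function.comp_apply]
    rw [this, mulVec_sub, Pi.sub_apply]
    ring
  have hYc : ∀ i a b, ContinuousOn (fun τ => Y i τ a b) (Set.Ici 0) :=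
    fun i a b t ht => (hYd i t ht a b).continuousWithinAt
  rw [tendsto_pi_nhds]
  intro a
  rw [Metric.tendsto_nhds]
  intro ε hε
  obtain ⟨η, hη, hηε⟩ : ∃ η > 0, (n : ℝ) * (nj * η ^ 2) < α * ε ^ 2 := by
    refine ⟨√(α * ε ^ 2 / (n * nj + 1)), by positivity, ?_⟩
    rw [Real.sq_sqrt (by positivity), ← mul_assoc, mul_div_assoc', div_lt_iff₀ (by positivity)]
    nlinarith [mul_pos hα (pow_pos hε 2)]
  have hwin : ∀ᶠ p in win T, ∀ i r, |(Y i p.2 *ᵥ at' i0 p.1) r| ≤ η := by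
    rw [eventually_all]
    intro i
    rw [eventually_all]
    intro r
    filter_upwards [(Metric.tendsto_nhds.1 (hfrozen i r)) η hη] with p hp
    rw [Real.dist_eq, sub_zero] at hp
    exact hp.le
  filter_upwards [win_unif hwin, eventually_ge_atTop 0] with t ht ht0
  have h1 := pe_bound hT hPE hYc ht0 (at' i0 t) ht
  have h2 := mul_le_mul_of_nonneg_left (sq_le_dot (at' i0 t) a) hα.le
  have h3 : at' i0 t a ^ 2 < ε ^ 2 := lt_of_mul_lt_mul_left (by linarith) hα.le
  rw [Pi.zero_apply, Real.dist_eq, sub_zero]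
  exact abs_lt_of_sq_lt_sq h3 hε.le
end

section
/- Fix n ≥ 1 and dimensions n_j, m. Let the communication topology be a fixed connected undirected graph on {1,…,n} with neighbor sets 𝒩_i, fixed delays T_{ij} > 0 for transmission from i to j, and constant matrices G_{ij} = G_{ji} ∈ ℝ^{m×m} defining gains K_{ij} = G_{ij}G_{ij}ᵀ. For i = 1, …, n let H_i : ℝ → ℝ^{n_j×n_j} be continuously differentiable with H_i(t) symmetric and H_i'(t) = C_i(t) + C_i(t)ᵀ for a continuous C_i, let K_{D_i} and P_i be symmetric positive definite, and let Y_i be continuous. Suppose differentiable functions s_i and ã_i (defined for all t ≥ −max_{i,j} T_{ij}, with the dynamics holding for t ≥ 0) satisfy H_i(t)ṡ_i(t) + (C_i(t) + K_{D_i})s_i(t) = Y_i(t)ã_i(t) and the delayed update ã̇_i(t) = −P_i[Y_i(t)ᵀs_i(t) − ∑_{j∈𝒩_i} K_{ij}(ã_j(t−T_{ji}) − ã_i(t))]. Define the wave variables v_{ij}(t) = G_{ji}ᵀ ã_i(t) and τ_{ji}(t) = v_{ji}(t−T_{ji}) − v_{ij}(t). Then the function V(t) = ∑_{i=1}^n (1/2)[s_i(t)ᵀH_i(t)s_i(t)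 + ã_i(t)ᵀP_i⁻¹ã_i(t) + ∑_{j∈𝒩_i} ∫_{t−T_{ji}}^{t} ‖v_{ji}(σ)‖² dσ] is differentiable for t ≥ 0 with V'(t) = −∑_{i=1}^n s_i(t)ᵀK_{D_i}s_i(t) − (1/2)∑_{i=1}^n ∑_{j∈𝒩_i} ‖τ_{ji}(t)‖² ≤ 0. -/
/-!
The derivative of `V` is computed term by term.

* Mechanical energy: by `H' = C + Cᵀ` and the closed-loop dynamics, the derivative of
  `½ sᵀ H s` is `sᵀ Y ã - sᵀ K_D s`; the Coriolis terms cancel (`mechanical_power`).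
* Parameter error: the matrix `P` in the update law cancels against `P⁻¹`, leaving
  `-sᵀ Y ã + ∑ⱼ v_ij ⬝ τ_ji`, where `K = G Gᵀ` turns the coupling into the wave variables
  (`adaptation_power`). The `sᵀ Y ã` terms cancel.
* Channels: the window integral contributes `½ (‖v_ji(t)‖² - ‖v_ji(t - T_ji)‖²)`.

Since the graph is undirected, `∑ᵢ ∑ⱼ ‖v_ji‖² = ∑ᵢ ∑ⱼ ‖v_ij‖²`, and with `w = v_ji(t - T_ji)`,
`v = v_ij(t)` each edge contributes `v ⬝ (w - v) + ½ ‖v‖² - ½ ‖w‖² = -½ ‖w - v‖²`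
(`channel_balance`).
-/

open Matrix MeasureTheory Filter Topology

/-- Product rule for the quadratic form `xᵀ A x` with both `x` and `A` time-varying and
`A` symmetric at the base point. -/
lemma hasDerivWithinAt_quadForm {p : ℕ} {x : ℝ → Fin p → ℝ} {A : ℝ → Matrix (Fin p) (Fin p) ℝ}
    {x' : Fin p → ℝ} {A' : Matrix (Fin p) (Fin p) ℝ} {S : Set ℝ} {t : ℝ}
    (hx : HasDerivWithinAt x x' S t)
    (hA : ∀ a b, HasDerivWithinAt (fun τ => A τ a b) (A' a b) S t)
    (hsymm : (A t).IsSymm) :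
    HasDerivWithinAt (fun τ => x τ ⬝ᵥ (A τ *ᵥ x τ))
      (2 * (x t ⬝ᵥ (A t *ᵥ x')) + x t ⬝ᵥ (A' *ᵥ x t)) S t := by
  have hxc := hasDerivWithinAt_pi.1 hx
  have h : HasDerivWithinAt (fun τ => x τ ⬝ᵥ (A τ *ᵥ x τ))
      (x' ⬝ᵥ (A t *ᵥ x t) + x t ⬝ᵥ (A' *ᵥ x t + A t *ᵥ x')) S t := by
    have := HasDerivWithinAt.fun_sum (u := Finset.univ) fun a _ =>
      (hxc a).fun_mul (HasDerivWithinAt.fun_sum (u := Finset.univ) fun b _ =>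
        (hA a b).fun_mul (hxc b))
    simpa only [dotProduct, mulVec, Pi.add_apply, Finset.sum_add_distrib] using this
  have e : x' ⬝ᵥ (A t *ᵥ x t) = x t ⬝ᵥ (A t *ᵥ x') := by
    rw [dotProduct_mulVec, ← mulVec_transpose, hsymm.eq, dotProduct_comm]
  convert h using 1
  rw [dotProduct_add, e]
  ring

/-- Rate of change of twice the mechanical energy along the closed loop, by skew-symmetry. -/
lemma mechanical_power {p q : ℕ} {H C KD : Matrix (Fin p) (Fin p) ℝ}
    {Y : Matrix (Fin p) (Fin q) ℝ} {s ds : Fin p → ℝ} {a : Fin q → ℝ}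
    (hdyn : H *ᵥ ds + (C + KD) *ᵥ s = Y *ᵥ a) :
    2 * (s ⬝ᵥ (H *ᵥ ds)) + s ⬝ᵥ ((C + Cᵀ) *ᵥ s) =
      2 * (s ⬝ᵥ (Y *ᵥ a)) - 2 * (s ⬝ᵥ (KD *ᵥ s)) := by
  have e : s ⬝ᵥ (Cᵀ *ᵥ s) = s ⬝ᵥ (C *ᵥ s) := by
    rw [mulVec_transpose, dotProduct_comm, dotProduct_mulVec]
  rw [← hdyn]
  simp only [add_mulVec, dotProduct_add, e]
  ring

/-- Power of the parameter error under the update law: the coupling term is the power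
delivered through the wave variables `(G j)ᵀ a`. -/
lemma adaptation_power {ι : Type*} {p q : ℕ} {P : Matrix (Fin q) (Fin q) ℝ} (hP : P.PosDef)
    (Y : Matrix (Fin p) (Fin q) ℝ) (s : Fin p → ℝ) (a : Fin q → ℝ)
    (N : Finset ι) (G : ι → Matrix (Fin q) (Fin q) ℝ) (b : ι → Fin q → ℝ) :
    a ⬝ᵥ (P⁻¹ *ᵥ (-(P *ᵥ (Yᵀ *ᵥ s - ∑ j ∈ N, (G j * (G j)ᵀ) *ᵥ (b j - a))))) =
      -(s ⬝ᵥ (Y *ᵥ a)) +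
        ∑ j ∈ N, ((G j)ᵀ *ᵥ a) ⬝ᵥ ((G j)ᵀ *ᵥ b j - (G j)ᵀ *ᵥ a) := by
  have hdet : IsUnit P.det := hP.det_pos.ne'.isUnit
  have e : a ⬝ᵥ (Yᵀ *ᵥ s) = s ⬝ᵥ (Y *ᵥ a) := by
    rw [mulVec_transpose, dotProduct_comm, dotProduct_mulVec]
  rw [mulVec_neg, mulVec_mulVec, nonsing_inv_mul _ hdet, one_mulVec, neg_sub, dotProduct_sub, e,
    dotProduct_sum, sub_eq_neg_add]
  congr 1
  refine Finset.sum_congr rfl fun j _ => ?_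
  rw [← mulVec_mulVec, dotProduct_mulVec, ← mulVec_transpose, mulVec_sub]

/-- Derivative of the energy stored in a channel with delay `T`. -/
lemma hasDerivAt_window {f : ℝ → ℝ} (hf : Continuous f) (T t : ℝ) :
    HasDerivAt (fun τ => ∫ σ in (τ - T)..τ, f σ) (f t - f (t - T)) t := by
  have h (u : ℝ) : HasDerivAt (fun τ => ∫ σ in (0 : ℝ)..τ, f σ) (f u) u :=
    intervalIntegral.integral_hasDerivAt_right (hf.intervalIntegrable _ _)
      hf.stronglyMeasurable.stronglyMeasurableAtFilter hf.continuousAt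
  refine ((h t).sub ((h (t - T)).comp_sub_const t T)).congr_of_eventuallyEq
    (Eventually.of_forall fun τ => ?_)
  exact (intervalIntegral.integral_interval_sub_left (hf.intervalIntegrable _ _)
    (hf.intervalIntegrable _ _)).symm

/-- Power balance of the channels of an undirected graph: `v i j` is the wave sent along
`(i, j)`, `w i j` the delayed wave received by `i` from `j`. -/
lemma channel_balance {ι : Type*} [Fintype ι] {q : ℕ} (N : ι → Finset ι)
    (hN : ∀ i j, j ∈ N i ↔ i ∈ N j) (v w : ι → ι → Fin q → ℝ) :
    ∑ i, ∑ j ∈ N i, (v i j ⬝ᵥ (w i j - v i j) +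
        (1 / 2) * (∑ k, v j i k ^ 2 - ∑ k, w i j k ^ 2)) =
      -((1 / 2) * ∑ i, ∑ j ∈ N i, ∑ k, (w i j - v i j) k ^ 2) := by
  have hswap : ∑ i, ∑ j ∈ N i, ∑ k, v j i k ^ 2 = ∑ i, ∑ j ∈ N i, ∑ k, v i j k ^ 2 :=
    Finset.sum_comm' fun i j => by simp [hN i j]
  have hsq : ∀ i j, v i j ⬝ᵥ (w i j - v i j) =
      (1 / 2) * ∑ k, w i j k ^ 2 - (1 / 2) * ∑ k, v i j k ^ 2 -
        (1 / 2) * ∑ k, (w i j - v i j) k ^ 2 := by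
    intro i j
    simp only [dotProduct, Finset.mul_sum, ← Finset.sum_sub_distrib, Pi.sub_apply]
    exact Finset.sum_congr rfl fun k _ => by ring
  simp only [hsq, mul_sub, Finset.sum_add_distrib, Finset.sum_sub_distrib, ← Finset.mul_sum,
    hswap]
  ring

/-- time-delayed decentralized adaptation.  With a fixed connected
undirected communication graph, fixed delays `Td i j > 0`, gains `K i j = G i j (G i j)ᵀ`
with `G i j = G j i`, wave variables `v i j t = (G j i)ᵀ ã_i(t)` and
`τ' j i t = v j i (t − Td j i) − v i j t`, the Lyapunov function
`V = ∑ᵢ (1/2)[s_iᵀ H_i s_i + ã_iᵀ P_i⁻¹ ã_i + ∑_{j ∈ N i} ∫_{t−T_{ji}}^t ‖v_{ji}(σ)‖² dσ]`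
is differentiable for `t ≥ 0` with
`V' = −∑ᵢ s_iᵀ K_{D_i} s_i − (1/2) ∑ᵢ ∑_{j ∈ N i} ‖τ'_{ji}(t)‖² ≤ 0`. -/
theorem delayed_lyapunov_derivative (n nj m : ℕ) (hn : 1 ≤ n)
    (H C : Fin n → ℝ → Matrix (Fin nj) (Fin nj) ℝ)
    (KD : Fin n → Matrix (Fin nj) (Fin nj) ℝ)
    (Y : Fin n → ℝ → Matrix (Fin nj) (Fin m) ℝ)
    (Pm : Fin n → Matrix (Fin m) (Fin m) ℝ)
    (s ds : Fin n → ℝ → Fin nj → ℝ) (at' : Fin n → ℝ → Fin m → ℝ)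
    -- fixed connected undirected communication graph
    (N : Fin n → Finset (Fin n))
    (hNloop : ∀ i, i ∉ N i)
    (hNsymm : ∀ i j, j ∈ N i ↔ i ∈ N j)
    (hNconn : ∀ a b : Fin n, Relation.ReflTransGen (fun u v => v ∈ N u) a b)
    -- fixed positive transmission delays
    (Td : Fin n → Fin n → ℝ) (hTd : ∀ i j, 0 < Td i j)
    -- gains `K i j = G i j (G i j)ᵀ` with `G i j = G j i`
    (G K : Fin n → Fin n → Matrix (Fin m) (Fin m) ℝ)
    (hGsymm : ∀ i j, G i j = G j i)
    (hKG : ∀ i j, K i j = G i j * (G i j)ᵀ)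
    -- wave variables `v i j t = (G j i)ᵀ ã_i(t)` and `τ' j i t = v j i (t − Td j i) − v i j t`
    (vv : Fin n → Fin n → ℝ → Fin m → ℝ)
    (hvv : ∀ i j t, vv i j t = (G j i)ᵀ *ᵥ at' i t)
    (tw : Fin n → Fin n → ℝ → Fin m → ℝ)
    (htw : ∀ j i t, tw j i t = vv j i (t - Td j i) - vv i j t)
    -- each `H i t` is symmetric, continuously differentiable with `H' = C + Cᵀ`
    (hHsymm : ∀ i t, (H i t).IsSymm)
    (hHd : ∀ i, ∀ t, 0 ≤ t → ∀ a b,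
      HasDerivWithinAt (fun τ => H i τ a b) ((C i t + (C i t)ᵀ) a b) (Set.Ici 0) t)
    (hCc : ∀ i a b, ContinuousOn (fun t => C i t a b) (Set.Ici 0))
    (hYc : ∀ i a b, ContinuousOn (fun t => Y i t a b) (Set.Ici 0))
    -- the gains are symmetric positive definite
    (hKD : ∀ i, (KD i).PosDef) (hPm : ∀ i, (Pm i).PosDef)
    -- the parameter estimates are continuous (in particular on the initial interval)
    (hatc : ∀ i, Continuous (at' i))
    -- closed-loop dynamics and time-delayed decentralized update law, for `t ≥ 0`
    (hs : ∀ i, ∀ t, 0 ≤ t → HasDerivWithinAt (s i) (ds i t) (Set.Ici 0) t)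
    (hdyn : ∀ i, ∀ t, 0 ≤ t →
      H i t *ᵥ ds i t + (C i t + KD i) *ᵥ s i t = Y i t *ᵥ at' i t)
    (hat : ∀ i, ∀ t, 0 ≤ t →
      HasDerivWithinAt (at' i)
        (-(Pm i *ᵥ ((Y i t)ᵀ *ᵥ s i t -
          ∑ j ∈ N i, K i j *ᵥ (at' j (t - Td j i) - at' i t)))) (Set.Ici 0) t) :
    ∀ t, 0 ≤ t →
      HasDerivWithinAt
        (fun τ => ∑ i, (1/2) * (s i τ ⬝ᵥ (H i τ *ᵥ s i τ) +
          at' i τ ⬝ᵥ ((Pm i)⁻¹ *ᵥ at' i τ) +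
          ∑ j ∈ N i, ∫ σ in (τ - Td j i)..τ, ∑ k, vv j i σ k ^ 2))
        (-(∑ i, s i t ⬝ᵥ (KD i *ᵥ s i t)) -
          (1/2) * ∑ i, ∑ j ∈ N i, ∑ k, tw j i t k ^ 2) (Set.Ici 0) t ∧
      (-(∑ i, s i t ⬝ᵥ (KD i *ᵥ s i t)) -
          (1/2) * ∑ i, ∑ j ∈ N i, ∑ k, tw j i t k ^ 2) ≤ 0 := by
  intro t ht
  refine ⟨?_, ?_⟩
  · have hvc : ∀ i j, Continuous fun σ => ∑ k, vv j i σ k ^ 2 := by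
      intro i j
      have hc : Continuous (vv j i) := by
        rw [funext (hvv j i)]
        exact continuous_const.matrix_mulVec (hatc j)
      fun_prop
    have hV := HasDerivWithinAt.fun_sum (u := Finset.univ) fun i _ =>
      ((((hasDerivWithinAt_quadForm (hs i t ht) (hHd i t ht) (hHsymm i t)).fun_add
        (hasDerivWithinAt_quadForm (A := fun _ => (Pm i)⁻¹) (A' := 0) (hat i t ht)
          (fun a b => hasDerivWithinAt_const _ _ _)
          (by simpa using (hPm i).isHermitian.inv))).fun_add
        (HasDerivWithinAt.fun_sum (u := N i) fun j _ =>
          (hasDerivAt_window (hvc i j) (Td j i) t).hasDerivWithinAt)).const_mul (1 / 2 : ℝ))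
    refine hV.congr_deriv ?_
    have hbal := channel_balance N hNsymm (fun i j => vv i j t)
      (fun i j => vv j i (t - Td j i))
    simp only [htw]
    rw [sub_eq_add_neg, ← hbal, ← Finset.sum_neg_distrib, ← Finset.sum_add_distrib]
    refine Finset.sum_congr rfl fun i _ => ?_
    have hap := adaptation_power (hPm i) (Y i t) (s i t) (at' i t) (N i) (G i)
      (fun j => at' j (t - Td j i))
    have hwave : ∑ j ∈ N i, ((G i j)ᵀ *ᵥ at' i t) ⬝ᵥ
        ((G i j)ᵀ *ᵥ at' j (t - Td j i) - (G i j)ᵀ *ᵥ at' i t) =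
        ∑ j ∈ N i, vv i j t ⬝ᵥ (vv j i (t - Td j i) - vv i j t) :=
      Finset.sum_congr rfl fun j _ => by rw [hvv, hvv, hGsymm j i]
    rw [hwave] at hap
    simp only [hKG]
    rw [mechanical_power (hdyn i t ht), hap, zero_mulVec, dotProduct_zero,
      Finset.sum_add_distrib, ← Finset.mul_sum]
    ring
  · have h1 : 0 ≤ ∑ i, s i t ⬝ᵥ (KD i *ᵥ s i t) :=
      Finset.sum_nonneg fun i _ => by
        simpa using (hKD i).posSemidef.dotProduct_mulVec_nonneg (s i t)
    have h2 : 0 ≤ ∑ i, ∑ j ∈ N i, ∑ k, tw j i t k ^ 2 := by positivity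
    linarith
end

section
/- Fix n ≥ 1 and dimensions n_j, m. Let the communication topology be a fixed connected undirected graph on {1,…,n} with neighbor sets 𝒩_i, fixed delays T_{ij} > 0 for transmission from i to j, and constant symmetric positive definite gains K_{ij} = K_{ji} ∈ ℝ^{m×m}. For i = 1, …, n let H_i : ℝ → ℝ^{n_j×n_j} be continuously differentiable with H_i(t) symmetric and μI ⪯ H_i(t) ⪯ MI (0 < μ ≤ M); let C_i be continuous and bounded with H_i'(t) = C_i(t) + C_i(t)ᵀ; let K_{D_i} and P_i be symmetric positive definite; and let Y_i : ℝ → ℝ^{n_j×m} be continuously differentiable with Y_i and Y_i' bounded. Suppose differentiable functions s_i and ã_i (defined for all t ≥ −max_{i,j} T_{ij}, bounded and continuous on the initial interval, with the dynamics holding for t ≥ 0) satisfy H_i(t)ṡ_i(t) + (C_i(t) + K_{D_i})s_i(t) = Y_i(t)ã_i(t) and ã̇_i(t) = −P_i[Y_i(t)ᵀs_i(t) − ∑_{j∈𝒩_i} K_{ij}(ã_j(t−T_{ji}) − ã_i(t))]. If {Y_1, …, Y_n} is collectively persistently exciting, then every parameter error satisfies ã_i(t) → 0 as t → ∞. -/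
/-!
The functional `lyapunov`, which adds to the mechanical energy and the weighted parameter error the
signals stored in the delay lines, satisfies `V' = -W ≤ 0` (`hasDerivAt_lyapunov`). Hence `V`
converges, and all signals and their derivatives are bounded. As `W` dominates the squares of the
coordinates of `s i` and of the delayed disagreements `x j (t - T j i) - x i t`, a Barbalat argument
(`tendsto_zero_of_dissipation`) sends both to zero. The update law then gives `x i' → 0`, so each
estimate is asymptotically constant over bounded windows, the delays become immaterial, and
connectedness of the graph yields consensus `x j - x i → 0`.

The equation of motion reads `(H s)' = Y x + (Cᵀ - D) s`. Since `H s → 0` and `(Cᵀ - D) s → 0`,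
and `Y x` has bounded derivative, `Y x → 0` (`tendsto_zero_of_deriv_add`). Working with the momentum
`H s` instead of `s` is what avoids any uniform continuity assumption on `C`.

By consensus, `Y i x i₀ → 0` for every `i` and a fixed robot `i₀`; as `x i₀` is almost constant on a
window `[t, t + T]`, the frozen vector `x i₀ t` is almost annihilated by all regressors on that
window. Collective persistency of excitation (`CollPEWith.dotProduct_self_le`) then forces
`x i₀ t → 0`.
-/

open Matrix MeasureTheory Filter Topology

open Asymptotics

/-! ### Barbalat-type lemmas -/

section Barbalat

/-- A one-sided Barbalat lemma without integrals. If `f` converges and `f' ≤ -g + e` with `e → 0`,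
then `limsup g ≤ 0` as soon as `g` has bounded derivative: a value `g t > ε` would persist over a
window of fixed length and force `f` to drop by a fixed amount. -/
lemma eventually_le_of_deriv_le {f F g g' e : ℝ → ℝ} {L : ℝ}
    (hf : Tendsto f atTop (𝓝 L))
    (hfd : ∀ᶠ t in atTop, HasDerivAt f (F t) t)
    (hgd : ∀ᶠ t in atTop, HasDerivAt g (g' t) t)
    (hg' : g' =O[atTop] (fun _ => (1 : ℝ)))
    (he : Tendsto e atTop (𝓝 0))
    (hF : ∀ᶠ t in atTop, F t ≤ -g t + e t) {ε : ℝ} (hε : 0 < ε) :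
    ∀ᶠ t in atTop, g t ≤ ε := by
  obtain ⟨B, hB⟩ := hg'.bound
  set δ : ℝ := ε / (4 * (|B| + 1)) with hδ
  have hB0 : 0 < |B| + 1 := by positivity
  have hδ0 : 0 < δ := by positivity
  have hBδ : |B| * δ ≤ ε / 4 := by
    have : (|B| + 1) * δ = ε / 4 := by rw [hδ]; field_simp
    nlinarith
  have hεδ : 0 < ε / 8 * δ := by positivity
  have h1 := (Metric.tendsto_nhds.1 hf) _ hεδ
  have h2 := (Metric.tendsto_nhds.1 he) (ε / 4) (by positivity)
  obtain ⟨t0, ht0⟩ := eventually_atTop.1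
    (h1.and (h2.and (hfd.and (hgd.and (hB.and hF)))))
  filter_upwards [eventually_ge_atTop t0] with t ht
  have hlt : t < t + δ := by linarith
  obtain ⟨c, hc, hcs⟩ := exists_hasDerivAt_eq_slope f F hlt
    (fun x hx => ((ht0 x (ht.trans hx.1)).2.2.1).continuousAt.continuousWithinAt)
    (fun x hx => (ht0 x (ht.trans hx.1.le)).2.2.1)
  obtain ⟨d, hd, hds⟩ := exists_hasDerivAt_eq_slope g g' hc.1
    (fun x hx => ((ht0 x (ht.trans hx.1)).2.2.2.1).continuousAt.continuousWithinAt)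
    (fun x hx => (ht0 x (ht.trans hx.1.le)).2.2.2.1)
  have hFc := (ht0 c (ht.trans hc.1.le)).2.2.2.2.2
  have hec := (ht0 c (ht.trans hc.1.le)).2.1
  have hBd := (ht0 d (ht.trans hd.1.le)).2.2.2.2.1
  have hft := (ht0 t ht).1
  have hft' := (ht0 (t + δ) (ht.trans hlt.le)).1
  rw [Real.dist_eq] at hec hft hft'
  simp only [norm_one, mul_one, Real.norm_eq_abs] at hBd
  rw [abs_lt] at hec hft hft'
  have hct : 0 < c - t := sub_pos.2 hc.1
  -- the slope of `g` on `[t, c]` is at least `-B`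
  have hgc : g t - ε / 4 ≤ g c := by
    rw [eq_div_iff hct.ne'] at hds
    have h3 : |g' d * (c - t)| ≤ |B| * δ := by
      rw [abs_mul]
      have : |c - t| ≤ δ := by rw [abs_of_pos hct]; linarith [hc.2]
      exact mul_le_mul (hBd.trans (le_abs_self B)) this (abs_nonneg _) (abs_nonneg _)
    have := (abs_le.1 (h3.trans hBδ)).1
    linarith
  have hFl : -(ε / 4) ≤ F c := by
    rw [hcs, le_div_iff₀ (by linarith)]
    ring_nf at *
    linarith
  linarith

/-- Barbalat's lemma with a vanishing perturbation: if `f` converges, `f' = g + e` with `e → 0`,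
and `g'` is bounded, then `g → 0`. Only the main part `g` of the derivative needs to be Lipschitz;
`e` may oscillate arbitrarily fast. -/
lemma tendsto_zero_of_deriv_add {f g g' e : ℝ → ℝ} {L : ℝ}
    (hf : Tendsto f atTop (𝓝 L))
    (hfd : ∀ᶠ t in atTop, HasDerivAt f (g t + e t) t)
    (hgd : ∀ᶠ t in atTop, HasDerivAt g (g' t) t)
    (hg' : g' =O[atTop] (fun _ => (1 : ℝ)))
    (he : Tendsto e atTop (𝓝 0)) :
    Tendsto g atTop (𝓝 0) := by
  rw [Metric.tendsto_nhds]
  intro ε hε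
  have he' : Tendsto (fun t => -e t) atTop (𝓝 0) := by simpa using he.neg
  have h1 := eventually_le_of_deriv_le (f := fun t => -f t) (F := fun t => -(g t + e t))
    (g := g) (e := fun t => -e t) hf.neg (hfd.mono fun t h => h.fun_neg) hgd hg' he'
    (Eventually.of_forall fun t => by linarith) (half_pos hε)
  have h2 := eventually_le_of_deriv_le (g := fun t => -g t) (g' := fun t => -g' t) hf hfd
    (hgd.mono fun t h => h.fun_neg) (by simpa using hg'.neg_left) he
    (Eventually.of_forall fun t => by linarith) (half_pos hε)
  filter_upwards [h1, h2] with t h1 h2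
  rw [Real.dist_eq, sub_zero, abs_lt]
  constructor <;> linarith

lemma exists_tendsto_of_deriv_nonpos {V V' : ℝ → ℝ}
    (hVd : ∀ t, 0 < t → HasDerivAt V (V' t) t) (hV' : ∀ t, 0 < t → V' t ≤ 0)
    (hV : ∀ t, 0 < t → 0 ≤ V t) : ∃ L, Tendsto V atTop (𝓝 L) := by
  have hanti : AntitoneOn V (Set.Ici 1) := by
    refine antitoneOn_of_deriv_nonpos (convex_Ici 1) ?_ ?_ ?_
    · exact fun x hx => (hVd x (zero_lt_one.trans_le hx)).continuousAt.continuousWithinAt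
    · intro x hx
      rw [interior_Ici] at hx
      exact (hVd x (zero_lt_one.trans hx)).differentiableAt.differentiableWithinAt
    · intro x hx
      rw [interior_Ici] at hx
      rw [(hVd x (zero_lt_one.trans hx)).deriv]
      exact hV' x (zero_lt_one.trans hx)
  have hanti' : Antitone (fun t => V (max 1 t)) := fun x y hxy =>
    hanti (Set.mem_Ici.2 (le_max_left _ _)) (Set.mem_Ici.2 (le_max_left _ _))
      (max_le_max le_rfl hxy)
  refine ⟨_, (tendsto_atTop_ciInf hanti' ⟨0, ?_⟩).congr' ?_⟩
  · rintro _ ⟨t, rfl⟩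
    exact hV _ (zero_lt_one.trans_le (le_max_left _ _))
  · filter_upwards [eventually_ge_atTop 1] with t ht
    rw [max_eq_right ht]

/-- A bounded signal `q` with bounded derivative tends to zero when `c q²` is dominated by the
dissipation rate of a convergent function `V`. -/
lemma tendsto_zero_of_dissipation {V W q q' : ℝ → ℝ} {L c : ℝ} (hc : 0 < c)
    (hV : Tendsto V atTop (𝓝 L))
    (hVd : ∀ᶠ t in atTop, HasDerivAt V (-W t) t)
    (hW : ∀ᶠ t in atTop, c * q t ^ 2 ≤ W t)
    (hqd : ∀ᶠ t in atTop, HasDerivAt q (q' t) t)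
    (hq : q =O[atTop] (fun _ => (1 : ℝ))) (hq' : q' =O[atTop] (fun _ => (1 : ℝ))) :
    Tendsto q atTop (𝓝 0) := by
  rw [Metric.tendsto_nhds]
  intro ε hε
  have h := eventually_le_of_deriv_le (g := fun t => c * q t ^ 2)
    (g' := fun t => c * (2 * (q t * q' t))) (e := fun _ => 0)
    (ε := c * (ε / 2) ^ 2) hV hVd
    (hqd.mono fun t h => ((h.fun_pow 2).const_mul c).congr_deriv (by
      push_cast; ring))
    (((hq.mul hq').const_mul_left 2).const_mul_left c |>.trans (by simp [isBigO_refl]))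
    tendsto_const_nhds (hW.mono fun t h => by linarith) (by positivity)
  filter_upwards [h] with t h
  rw [Real.dist_eq, sub_zero]
  have h2 := le_of_mul_le_mul_left h hc
  have := abs_le_of_sq_le_sq h2 (by positivity)
  linarith

/-- A function whose derivative vanishes at infinity is asymptotically constant on windows of
fixed length. -/
lemma eventually_window_of_deriv_tendsto_zero {q q' : ℝ → ℝ}
    (hqd : ∀ᶠ t in atTop, HasDerivAt q (q' t) t) (hq' : Tendsto q' atTop (𝓝 0))
    {T ε : ℝ} (hT : 0 < T) (hε : 0 < ε) :
    ∀ᶠ t in atTop, ∀ τ ∈ Set.Icc t (t + T), |q τ - q t| ≤ ε := by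
  have h := (Metric.tendsto_nhds.1 hq') (ε / T) (by positivity)
  obtain ⟨t0, ht0⟩ := eventually_atTop.1 (hqd.and h)
  filter_upwards [eventually_ge_atTop t0] with t ht τ hτ
  rcases hτ.1.eq_or_lt with rfl | hlt
  · simpa using hε.le
  obtain ⟨c, hc, hcs⟩ := exists_hasDerivAt_eq_slope q q' hlt
    (fun x hx => ((ht0 x (ht.trans hx.1)).1).continuousAt.continuousWithinAt)
    (fun x hx => (ht0 x (ht.trans hx.1.le)).1)
  have hb := (ht0 c (ht.trans hc.1.le)).2
  rw [Real.dist_eq, sub_zero] at hb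
  have hpos : 0 < τ - t := sub_pos.2 hlt
  rw [eq_div_iff hpos.ne'] at hcs
  rw [← hcs, abs_mul, abs_of_pos hpos]
  calc |q' c| * (τ - t) ≤ ε / T * T := by
        refine mul_le_mul hb.le (by linarith [hτ.2]) hpos.le (by positivity)
    _ = ε := by field_simp

end Barbalat

/-! ### Matrices and quadratic forms -/

section LinearAlgebra

variable {p k : ℕ}

/-- A positive definite quadratic form dominates the square of each coordinate. With
`w = A⁻¹ eₐ`, this is nonnegativity of the form at `x - r w` for `r = xₐ / (wₐ + 1)`. -/
lemma posDef_coord_sq_le {A : Matrix (Fin k) (Fin k) ℝ} (hA : A.PosDef) (a : Fin k) :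
    ∃ c > 0, ∀ x : Fin k → ℝ, c * x a ^ 2 ≤ x ⬝ᵥ (A *ᵥ x) := by
  have hdet : IsUnit A.det := (Matrix.isUnit_iff_isUnit_det A).1 hA.isUnit
  have hAT : Aᵀ = A := by simpa using hA.isHermitian.eq
  set w : Fin k → ℝ := A⁻¹ *ᵥ Pi.single a 1 with hw
  have hAw : A *ᵥ w = Pi.single a 1 := by
    rw [hw, mulVec_mulVec, mul_nonsing_inv _ hdet, one_mulVec]
  have hβ : 0 ≤ w a := by
    have := hA.posSemidef.dotProduct_mulVec_nonneg w
    rw [hAw] at this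
    simpa using this
  refine ⟨1 / (w a + 1), by positivity, fun x => ?_⟩
  have hsym : w ⬝ᵥ (A *ᵥ x) = x a := by
    rw [dotProduct_mulVec, ← mulVec_transpose, hAT, hAw]; simp
  set r : ℝ := x a / (w a + 1) with hr
  have h := hA.posSemidef.dotProduct_mulVec_nonneg (x - r • w)
  simp only [star_trivial, mulVec_sub, mulVec_smul, hAw, dotProduct_sub, sub_dotProduct,
    smul_dotProduct, dotProduct_smul, hsym, dotProduct_single, Pi.sub_apply,
    Pi.smul_apply, smul_eq_mul, mul_one] at h
  have hx : x a = r * (w a + 1) := by rw [hr]; field_simp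
  have : 1 / (w a + 1) * x a ^ 2 = r ^ 2 * (w a + 1) := by rw [hx]; field_simp
  rw [this]
  rw [hx] at h
  nlinarith [sq_nonneg r]

lemma hasDerivAt_dotProduct {u v : ℝ → Fin k → ℝ} {u' v' : Fin k → ℝ} {t : ℝ}
    (hu : HasDerivAt u u' t) (hv : HasDerivAt v v' t) :
    HasDerivAt (fun τ => u τ ⬝ᵥ v τ) (u' ⬝ᵥ v t + u t ⬝ᵥ v') t := by
  rw [hasDerivAt_pi] at hu hv
  simp only [dotProduct, ← Finset.sum_add_distrib]
  exact HasDerivAt.fun_sum fun i _ => (hu i).mul (hv i)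

lemma hasDerivAt_mulVec {A : ℝ → Matrix (Fin p) (Fin k) ℝ} {A' : Matrix (Fin p) (Fin k) ℝ}
    {v : ℝ → Fin k → ℝ} {v' : Fin k → ℝ} {t : ℝ}
    (hA : ∀ a b, HasDerivAt (fun τ => A τ a b) (A' a b) t) (hv : HasDerivAt v v' t) :
    HasDerivAt (fun τ => A τ *ᵥ v τ) (A' *ᵥ v t + A t *ᵥ v') t := by
  rw [hasDerivAt_pi]
  intro i
  exact hasDerivAt_dotProduct (hasDerivAt_pi.2 (hA i)) hv

lemma isBigO_mulVec {A : ℝ → Matrix (Fin p) (Fin k) ℝ} {v : ℝ → Fin k → ℝ}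
    (hA : ∀ a b, (fun t => A t a b) =O[atTop] (fun _ => (1 : ℝ)))
    (hv : ∀ b, (fun t => v t b) =O[atTop] (fun _ => (1 : ℝ))) (a : Fin p) :
    (fun t => (A t *ᵥ v t) a) =O[atTop] (fun _ => (1 : ℝ)) := by
  simp only [mulVec, dotProduct]
  exact IsBigO.fun_sum fun b _ => by simpa using (hA a b).mul (hv b)

lemma tendsto_mulVec_zero {A : ℝ → Matrix (Fin p) (Fin k) ℝ} {v : ℝ → Fin k → ℝ}
    (hA : ∀ a b, (fun t => A t a b) =O[atTop] (fun _ => (1 : ℝ)))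
    (hv : ∀ b, Tendsto (fun t => v t b) atTop (𝓝 0)) (a : Fin p) :
    Tendsto (fun t => (A t *ᵥ v t) a) atTop (𝓝 0) := by
  simp only [mulVec, dotProduct]
  rw [← Finset.sum_const_zero (s := (Finset.univ : Finset (Fin k)))]
  refine tendsto_finsetSum _ fun b _ => ?_
  have h2 := (isLittleO_one_iff ℝ).2 (hv b)
  have := (hA a b).mul_isLittleO h2
  simp only [mul_one] at this
  exact (isLittleO_one_iff ℝ).1 this

lemma isBigO_one_of_sq_le {q V : ℝ → ℝ} {c : ℝ} (hc : 0 < c)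
    (hV : V =O[atTop] (fun _ => (1 : ℝ))) (h : ∀ᶠ t in atTop, c * q t ^ 2 ≤ V t) :
    q =O[atTop] (fun _ => (1 : ℝ)) := by
  obtain ⟨B, hB⟩ := hV.bound
  refine IsBigO.of_bound (B / c + 1) ?_
  filter_upwards [h, hB] with t h1 h2
  simp only [norm_one, mul_one, Real.norm_eq_abs] at h2 ⊢
  have h3 : q t ^ 2 ≤ B / c := by
    rw [le_div_iff₀ hc]
    linarith [le_abs_self (V t)]
  rw [← sq_abs] at h3
  nlinarith [sq_nonneg (|q t| - 1), abs_nonneg (q t)]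

/-- Entrywise bound for a symmetric `A` with `μ I ⪯ A ⪯ M I`, obtained by testing the form on
`eₐ + e_b`. The constant is not sharp. -/
lemma abs_entry_le_of_bounds {A : Matrix (Fin k) (Fin k) ℝ} {μ M : ℝ} (hμ : 0 < μ)
    (hA : A.IsSymm) (hlb : (A - μ • 1).PosSemidef)
    (hub : ((M • 1 : Matrix (Fin k) (Fin k) ℝ) - A).PosSemidef) (a b : Fin k) :
    |A a b| ≤ 2 * M := by
  have hlow : ∀ x : Fin k → ℝ, μ * (x ⬝ᵥ x) ≤ x ⬝ᵥ (A *ᵥ x) := fun x => by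
    have := hlb.dotProduct_mulVec_nonneg x
    simpa [sub_mulVec, smul_mulVec] using this
  have hup : ∀ x : Fin k → ℝ, x ⬝ᵥ (A *ᵥ x) ≤ M * (x ⬝ᵥ x) := fun x => by
    have := hub.dotProduct_mulVec_nonneg x
    simpa [sub_mulVec, smul_mulVec] using this
  have hd : ∀ i, 0 ≤ A i i ∧ A i i ≤ M := fun i => by
    have h1 := hlow (Pi.single i 1)
    have h2 := hup (Pi.single i 1)
    simp at h1 h2
    exact ⟨by linarith, h2⟩
  have hM : 0 ≤ M := (hd a).1.trans (hd a).2
  have hs : A b a = A a b := hA.apply a b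
  have h1 := hlow (Pi.single a 1 + Pi.single b 1)
  have h2 := hup (Pi.single a 1 + Pi.single b 1)
  set x : Fin k → ℝ := Pi.single a 1 + Pi.single b 1 with hx
  have h3 : 0 ≤ x ⬝ᵥ x := Finset.sum_nonneg fun i _ => mul_self_nonneg _
  have h4 : x ⬝ᵥ x ≤ 4 := by
    rw [hx]
    by_cases hab : a = b
    · subst hab; simp [dotProduct_add]; norm_num
    · simp [dotProduct_add, hab, Ne.symm hab]; norm_num
  have h5 : 0 ≤ x ⬝ᵥ (A *ᵥ x) := (mul_nonneg hμ.le h3).trans h1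
  have h6 : x ⬝ᵥ (A *ᵥ x) ≤ M * 4 := h2.trans (mul_le_mul_of_nonneg_left h4 hM)
  simp only [hx, mulVec_add, dotProduct_add, add_dotProduct, mulVec_single_one,
    single_dotProduct, one_mul, col_apply, hs] at h5 h6
  have := hd a
  have := hd b
  rw [abs_le]
  constructor <;> linarith

end LinearAlgebra

/-! ### The Lyapunov–Krasovskii functional -/

section Lyapunov

variable {k m n : ℕ}

lemma hasDerivAt_quadForm {A : Matrix (Fin k) (Fin k) ℝ} (hA : A.IsHermitian)
    {u : ℝ → Fin k → ℝ} {u' : Fin k → ℝ} {t : ℝ} (hu : HasDerivAt u u' t) :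
    HasDerivAt (fun τ => u τ ⬝ᵥ (A *ᵥ u τ)) (2 * (u t ⬝ᵥ (A *ᵥ u'))) t := by
  have hAT : Aᵀ = A := by simpa using hA.eq
  have h := hasDerivAt_dotProduct hu
    (hasDerivAt_mulVec (A := fun _ => A) (A' := 0) (fun a b => hasDerivAt_const _ _) hu)
  refine h.congr_deriv ?_
  have : u' ⬝ᵥ (A *ᵥ u t) = u t ⬝ᵥ (A *ᵥ u') := by
    rw [dotProduct_mulVec, ← mulVec_transpose, hAT, dotProduct_comm]
  rw [this, zero_mulVec, zero_add]
  ring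

/-- Along `H ṡ + (C + D) s = y`, the identity `H' = C + Cᵀ` makes the Coriolis term drop out of
the energy balance. -/
lemma hasDerivAt_mechanical_energy {H : ℝ → Matrix (Fin k) (Fin k) ℝ}
    {C D : Matrix (Fin k) (Fin k) ℝ} {y : Fin k → ℝ} {s : ℝ → Fin k → ℝ} {ds : Fin k → ℝ}
    {t : ℝ} (hsym : (H t).IsSymm)
    (hH : ∀ a b, HasDerivAt (fun τ => H τ a b) ((C + Cᵀ) a b) t) (hs : HasDerivAt s ds t)
    (hdyn : H t *ᵥ ds + (C + D) *ᵥ s t = y) :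
    HasDerivAt (fun τ => s τ ⬝ᵥ (H τ *ᵥ s τ))
      (2 * (s t ⬝ᵥ y) - 2 * (s t ⬝ᵥ (D *ᵥ s t))) t := by
  refine (hasDerivAt_dotProduct hs (hasDerivAt_mulVec hH hs)).congr_deriv ?_
  have h1 : ds ⬝ᵥ (H t *ᵥ s t) = s t ⬝ᵥ (H t *ᵥ ds) := by
    rw [dotProduct_mulVec, ← mulVec_transpose, hsym.eq, dotProduct_comm]
  have h2 : s t ⬝ᵥ (Cᵀ *ᵥ s t) = s t ⬝ᵥ (C *ᵥ s t) := by
    rw [dotProduct_mulVec, vecMul_transpose, dotProduct_comm]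
  rw [h1, ← hdyn]
  simp only [add_mulVec, dotProduct_add, h2]
  ring

lemma hasDerivAt_delay_integral {φ : ℝ → ℝ} (hφ : Continuous φ) (T t : ℝ) :
    HasDerivAt (fun t => ∫ τ in (t - T)..t, φ τ) (φ t - φ (t - T)) t := by
  have h : ∀ x, HasDerivAt (fun t => ∫ τ in (0:ℝ)..t, φ τ) (φ x) x := fun x =>
    intervalIntegral.integral_hasDerivAt_right (hφ.intervalIntegrable _ _)
      (hφ.stronglyMeasurableAtFilter _ _) hφ.continuousAt
  have h2 := (h t).sub ((h (t - T)).comp_sub_const t T)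
  refine h2.congr_of_eventuallyEq (Eventually.of_forall fun x => ?_)
  exact (intervalIntegral.integral_interval_sub_left (hφ.intervalIntegrable _ _)
    (hφ.intervalIntegrable _ _)).symm

/-- Twice the Lyapunov–Krasovskii functional: mechanical energy, parameter error weighted by
`P⁻¹`, and, for each directed edge, the quadratic form of the transmitted signal stored over the
delay window. -/
noncomputable def lyapunov (H : Fin n → ℝ → Matrix (Fin k) (Fin k) ℝ)
    (P : Fin n → Matrix (Fin m) (Fin m) ℝ) (N : Fin n → Finset (Fin n))
    (Td : Fin n → Fin n → ℝ) (K : Fin n → Fin n → Matrix (Fin m) (Fin m) ℝ)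
    (s : Fin n → ℝ → Fin k → ℝ) (x : Fin n → ℝ → Fin m → ℝ) (t : ℝ) : ℝ :=
  ∑ i, (s i t ⬝ᵥ (H i t *ᵥ s i t) + x i t ⬝ᵥ ((P i)⁻¹ *ᵥ x i t) +
    ∑ j ∈ N i, ∫ τ in (t - Td j i)..t, x j τ ⬝ᵥ (K i j *ᵥ x j τ))

/-- The dissipation rate of `lyapunov`: damping of the tracking errors plus the disagreement
between each delayed received estimate and the receiver's own one. -/
noncomputable def dissipation (D : Fin n → Matrix (Fin k) (Fin k) ℝ)
    (N : Fin n → Finset (Fin n))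
    (Td : Fin n → Fin n → ℝ) (K : Fin n → Fin n → Matrix (Fin m) (Fin m) ℝ)
    (s : Fin n → ℝ → Fin k → ℝ) (x : Fin n → ℝ → Fin m → ℝ) (t : ℝ) : ℝ :=
  ∑ i, (2 * (s i t ⬝ᵥ (D i *ᵥ s i t)) +
    ∑ j ∈ N i, (x j (t - Td j i) - x i t) ⬝ᵥ (K i j *ᵥ (x j (t - Td j i) - x i t)))

/-- The balance `V' = -W`. The terms `s · Y x` exchanged between tracking and adaptation cancel, and
completing the square on each edge leaves the delayed disagreement. -/
lemma hasDerivAt_lyapunov {H : Fin n → ℝ → Matrix (Fin k) (Fin k) ℝ}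
    {C D : Fin n → Matrix (Fin k) (Fin k) ℝ} {Y : Fin n → Matrix (Fin k) (Fin m) ℝ}
    {P : Fin n → Matrix (Fin m) (Fin m) ℝ} {N : Fin n → Finset (Fin n)}
    {Td : Fin n → Fin n → ℝ} {K : Fin n → Fin n → Matrix (Fin m) (Fin m) ℝ}
    {s : Fin n → ℝ → Fin k → ℝ} {ds : Fin n → Fin k → ℝ} {x : Fin n → ℝ → Fin m → ℝ} {t : ℝ}
    (hN : ∀ i j, j ∈ N i ↔ i ∈ N j) (hK : ∀ i j, K i j = K j i)
    (hKpd : ∀ i j, (K i j).PosDef) (hP : ∀ i, (P i).PosDef)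
    (hsym : ∀ i, (H i t).IsSymm)
    (hH : ∀ i a b, HasDerivAt (fun τ => H i τ a b) ((C i + (C i)ᵀ) a b) t)
    (hxc : ∀ i, Continuous (x i)) (hs : ∀ i, HasDerivAt (s i) (ds i) t)
    (hdyn : ∀ i, H i t *ᵥ ds i + (C i + D i) *ᵥ s i t = Y i *ᵥ x i t)
    (hx : ∀ i, HasDerivAt (x i) (-(P i *ᵥ ((Y i)ᵀ *ᵥ s i t -
          ∑ j ∈ N i, K i j *ᵥ (x j (t - Td j i) - x i t)))) t) :
    HasDerivAt (lyapunov H P N Td K s x) (-dissipation D N Td K s x t) t := by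
  have hKc : ∀ i j, Continuous fun τ => x j τ ⬝ᵥ (K i j *ᵥ x j τ) := fun i j =>
    (hxc j).dotProduct (continuous_const.matrix_mulVec (hxc j))
  have hd := HasDerivAt.fun_sum (u := Finset.univ) fun i _ =>
    (((hasDerivAt_mechanical_energy (hsym i) (hH i) (hs i) (hdyn i)).add
      (hasDerivAt_quadForm (hP i).inv.isHermitian (hx i))).add
      (HasDerivAt.fun_sum (u := N i) fun j _ => hasDerivAt_delay_integral (hKc i j) (Td j i) t))
  refine hd.congr_deriv ?_
  -- the two storage terms cancel after exchanging the roles of the endpoints of each edge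
  have hswap : ∑ i, ∑ j ∈ N i, x j t ⬝ᵥ (K i j *ᵥ x j t) =
      ∑ i, ∑ j ∈ N i, x i t ⬝ᵥ (K i j *ᵥ x i t) := by
    rw [Finset.sum_comm' (t' := Finset.univ) (s' := N) (by simpa using fun i j => hN i j)]
    exact Finset.sum_congr rfl fun i _ => Finset.sum_congr rfl fun j _ => by rw [hK]
  have hterm : ∀ i, 2 * (s i t ⬝ᵥ (Y i *ᵥ x i t)) - 2 * (s i t ⬝ᵥ (D i *ᵥ s i t)) +
      2 * (x i t ⬝ᵥ ((P i)⁻¹ *ᵥ (-(P i *ᵥ ((Y i)ᵀ *ᵥ s i t -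
          ∑ j ∈ N i, K i j *ᵥ (x j (t - Td j i) - x i t)))))) +
      ∑ j ∈ N i, (x j t ⬝ᵥ (K i j *ᵥ x j t) -
        x j (t - Td j i) ⬝ᵥ (K i j *ᵥ x j (t - Td j i))) =
      -(2 * (s i t ⬝ᵥ (D i *ᵥ s i t)) +
        ∑ j ∈ N i, (x j (t - Td j i) - x i t) ⬝ᵥ (K i j *ᵥ (x j (t - Td j i) - x i t))) +
      (∑ j ∈ N i, x j t ⬝ᵥ (K i j *ᵥ x j t) - ∑ j ∈ N i, x i t ⬝ᵥ (K i j *ᵥ x i t)) := by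
    intro i
    have hdet : IsUnit (P i).det := (Matrix.isUnit_iff_isUnit_det _).1 (hP i).isUnit
    have hY : x i t ⬝ᵥ ((Y i)ᵀ *ᵥ s i t) = s i t ⬝ᵥ (Y i *ᵥ x i t) := by
      rw [dotProduct_mulVec, vecMul_transpose, dotProduct_comm]
    have hedge : ∀ j, (x j (t - Td j i) - x i t) ⬝ᵥ (K i j *ᵥ (x j (t - Td j i) - x i t)) =
        x j (t - Td j i) ⬝ᵥ (K i j *ᵥ x j (t - Td j i)) - x i t ⬝ᵥ (K i j *ᵥ x i t)
          - 2 * (x i t ⬝ᵥ (K i j *ᵥ (x j (t - Td j i) - x i t))) := by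
      intro j
      have hKT : (K i j)ᵀ = K i j := by simpa using (hKpd i j).isHermitian.eq
      have : x j (t - Td j i) ⬝ᵥ (K i j *ᵥ x i t) = x i t ⬝ᵥ (K i j *ᵥ x j (t - Td j i)) := by
        rw [dotProduct_mulVec, ← mulVec_transpose, hKT, dotProduct_comm]
      simp only [sub_dotProduct, mulVec_sub, dotProduct_sub, this]
      ring
    rw [mulVec_neg, mulVec_mulVec, nonsing_inv_mul _ hdet, one_mulVec]
    simp only [hedge, Finset.sum_sub_distrib, dotProduct_neg, dotProduct_sub, hY,
      dotProduct_sum, ← Finset.mul_sum]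
    ring
  rw [Finset.sum_congr rfl fun i _ => hterm i, Finset.sum_add_distrib, Finset.sum_sub_distrib,
    hswap, sub_self, add_zero, Finset.sum_neg_distrib]
  rfl

end Lyapunov

/-! ### Persistency of excitation -/

section Excitation

/-- The quadratic form of the Gram integral is the energy of `W x` over the window. Continuity
is needed because the entries of `gramInt` are separate integrals. -/
lemma dotProduct_gramInt_mulVec {p m : ℕ} {W : ℝ → Matrix (Fin p) (Fin m) ℝ} {t T : ℝ}
    (hW : ∀ a b, ContinuousOn (fun τ => W τ a b) (Set.uIcc t (t + T))) (x : Fin m → ℝ) :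
    x ⬝ᵥ (gramInt W t T *ᵥ x) = ∫ τ in t..(t + T), (W τ *ᵥ x) ⬝ᵥ (W τ *ᵥ x) := by
  have hG : ∀ a b, ContinuousOn (fun τ => ((W τ)ᵀ * W τ) a b) (Set.uIcc t (t + T)) := by
    intro a b
    simp only [Matrix.mul_apply, transpose_apply]
    exact continuousOn_finsetSum _ fun c _ => (hW c a).mul (hW c b)
  have hpt : ∀ τ, (W τ *ᵥ x) ⬝ᵥ (W τ *ᵥ x) =
      ∑ a, ∑ b, x a * (((W τ)ᵀ * W τ) a b * x b) := by
    intro τ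
    have : (W τ *ᵥ x) ⬝ᵥ (W τ *ᵥ x) = x ⬝ᵥ (((W τ)ᵀ * W τ) *ᵥ x) := by
      rw [← mulVec_mulVec, dotProduct_mulVec x, vecMul_transpose]
    rw [this]
    simp only [dotProduct, mulVec, Finset.mul_sum]
  simp only [hpt]
  rw [intervalIntegral.integral_finsetSum]
  · simp only [dotProduct, mulVec, Finset.mul_sum]
    refine Finset.sum_congr rfl fun a _ => ?_
    rw [intervalIntegral.integral_finsetSum]
    · refine Finset.sum_congr rfl fun b _ => ?_
      rw [intervalIntegral.integral_const_mul, intervalIntegral.integral_mul_const]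
      rfl
    · exact fun b _ => (((hG a b).mul_const (x b)).const_mul (x a)).intervalIntegrable
  · exact fun a _ => (continuousOn_finsetSum _ fun b _ =>
      ((hG a b).mul_const (x b)).const_mul (x a)).intervalIntegrable

/-- A fixed vector that is almost annihilated by every regressor throughout a window is small. -/
lemma CollPEWith.dotProduct_self_le {n p m : ℕ} {Y : Fin n → ℝ → Matrix (Fin p) (Fin m) ℝ}
    {T α t ε : ℝ} (hPE : CollPEWith Y T α) (hT : 0 < T) (ht : 0 ≤ t)
    (hY : ∀ i a b, ContinuousOn (fun τ => Y i τ a b) (Set.Ici 0)) (x : Fin m → ℝ)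
    (hx : ∀ i, ∀ τ ∈ Set.Icc t (t + T), ∀ c, |(Y i τ *ᵥ x) c| ≤ ε) :
    α * (x ⬝ᵥ x) ≤ n * p * ε ^ 2 := by
  have h := (hPE t ht).dotProduct_mulVec_nonneg x
  simp only [star_trivial, sub_mulVec, smul_mulVec, one_mulVec, dotProduct_sub,
    dotProduct_smul, smul_eq_mul, sum_mulVec, dotProduct_sum] at h
  have hi : ∀ i, x ⬝ᵥ (gramInt (Y i) t T *ᵥ x) ≤ p * ε ^ 2 * T := by
    intro i
    rw [dotProduct_gramInt_mulVec (fun a b => (hY i a b).mono ?_)]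
    · have := intervalIntegral.norm_integral_le_of_norm_le_const (a := t) (b := t + T)
        (f := fun τ => (Y i τ *ᵥ x) ⬝ᵥ (Y i τ *ᵥ x)) (C := p * ε ^ 2) ?_
      · rw [add_sub_cancel_left, abs_of_pos hT] at this
        exact (le_abs_self _).trans this
      · intro τ hτ
        rw [Set.uIoc_of_le (by linarith)] at hτ
        have hsq : ∀ c, (Y i τ *ᵥ x) c * (Y i τ *ᵥ x) c ≤ ε ^ 2 := fun c => by
          rw [← sq, ← sq_abs]
          exact pow_le_pow_left₀ (abs_nonneg _) (hx i τ ⟨hτ.1.le, hτ.2⟩ c) 2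
        rw [dotProduct, Real.norm_of_nonneg (Finset.sum_nonneg fun c _ => mul_self_nonneg _)]
        exact (Finset.sum_le_sum fun c _ => hsq c).trans (by simp)
    · rw [Set.uIcc_of_le (by linarith)]
      exact fun τ hτ => ht.trans hτ.1
  have hsum : ∑ i, x ⬝ᵥ (gramInt (Y i) t T *ᵥ x) ≤ n * (p * ε ^ 2 * T) :=
    (Finset.sum_le_sum fun i _ => hi i).trans (by simp)
  have h2 := mul_le_mul_of_nonneg_left hsum (inv_pos.2 hT).le
  have h3 : T⁻¹ * (n * (p * ε ^ 2 * T)) = n * p * ε ^ 2 := by field_simp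
  linarith

end Excitation

/-! ### Parameter convergence -/

/-- Theorem 5 of the paper: multi-robot direct adaptive control with
time-delayed decentralized updates.  With a fixed connected undirected communication
graph, fixed positive delays, and symmetric positive definite gains `K i j = K j i`,
collective persistency of excitation of `{Y_1, …, Y_n}` implies every parameter error
`ã_i → 0` as `t → ∞`. -/
theorem delayed_parameter_convergence (n nj m : ℕ) (hn : 1 ≤ n)
    (H C : Fin n → ℝ → Matrix (Fin nj) (Fin nj) ℝ)
    (KD : Fin n → Matrix (Fin nj) (Fin nj) ℝ)
    (Y dY : Fin n → ℝ → Matrix (Fin nj) (Fin m) ℝ)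
    (Pm : Fin n → Matrix (Fin m) (Fin m) ℝ)
    (μ M : ℝ) (hμ : 0 < μ) (hμM : μ ≤ M)
    (s ds : Fin n → ℝ → Fin nj → ℝ) (at' : Fin n → ℝ → Fin m → ℝ)
    -- fixed connected undirected communication graph
    (N : Fin n → Finset (Fin n))
    (hNloop : ∀ i, i ∉ N i)
    (hNsymm : ∀ i j, j ∈ N i ↔ i ∈ N j)
    (hNconn : ∀ a b : Fin n, Relation.ReflTransGen (fun u v => v ∈ N u) a b)
    -- fixed positive transmission delays
    (Td : Fin n → Fin n → ℝ) (hTd : ∀ i j, 0 < Td i j)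
    -- constant symmetric positive definite gains with `K i j = K j i`
    (K : Fin n → Fin n → Matrix (Fin m) (Fin m) ℝ)
    (hKsymm : ∀ i j, K i j = K j i)
    (hKpd : ∀ i j, (K i j).PosDef)
    -- each `H i t` symmetric with `μ I ⪯ H i t ⪯ M I`, continuously differentiable
    (hHsymm : ∀ i t, (H i t).IsSymm)
    (hHlb : ∀ i t, (H i t - μ • 1).PosSemidef)
    (hHub : ∀ i t, ((M • 1 : Matrix (Fin nj) (Fin nj) ℝ) - H i t).PosSemidef)
    (hHd : ∀ i, ∀ t, 0 ≤ t → ∀ a b,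
      HasDerivWithinAt (fun τ => H i τ a b) ((C i t + (C i t)ᵀ) a b) (Set.Ici 0) t)
    -- each `C i` continuous and bounded
    (hCc : ∀ i a b, ContinuousOn (fun t => C i t a b) (Set.Ici 0))
    (hCbd : ∃ c, ∀ i, ∀ t, 0 ≤ t → ∀ a b, |C i t a b| ≤ c)
    -- the gains are symmetric positive definite
    (hKD : ∀ i, (KD i).PosDef) (hPm : ∀ i, (Pm i).PosDef)
    -- each `Y i` continuously differentiable with `Y i` and `Y i '` bounded
    (hYd : ∀ i, ∀ t, 0 ≤ t → ∀ a b,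
      HasDerivWithinAt (fun τ => Y i τ a b) (dY i t a b) (Set.Ici 0) t)
    (hdYc : ∀ i a b, ContinuousOn (fun t => dY i t a b) (Set.Ici 0))
    (hYbd : ∃ c, ∀ i, ∀ t, 0 ≤ t → ∀ a b, |Y i t a b| ≤ c ∧ |dY i t a b| ≤ c)
    -- the signals are continuous (in particular bounded on the initial interval)
    (hsc : ∀ i, Continuous (s i)) (hatc : ∀ i, Continuous (at' i))
    -- closed-loop dynamics and time-delayed decentralized update law, for `t ≥ 0`
    (hs : ∀ i, ∀ t, 0 ≤ t → HasDerivWithinAt (s i) (ds i t) (Set.Ici 0) t)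
    (hdyn : ∀ i, ∀ t, 0 ≤ t →
      H i t *ᵥ ds i t + (C i t + KD i) *ᵥ s i t = Y i t *ᵥ at' i t)
    (hat : ∀ i, ∀ t, 0 ≤ t →
      HasDerivWithinAt (at' i)
        (-(Pm i *ᵥ ((Y i t)ᵀ *ᵥ s i t -
          ∑ j ∈ N i, K i j *ᵥ (at' j (t - Td j i) - at' i t)))) (Set.Ici 0) t)
    -- collective persistency of excitation
    (hPE : ∃ T > (0:ℝ), ∃ α > (0:ℝ), CollPEWith Y T α) :
    ∀ i, Tendsto (at' i) atTop (𝓝 0) := by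
  obtain ⟨T, hT, α, hα, hPE⟩ := hPE
  obtain ⟨cC, hCbd⟩ := hCbd
  obtain ⟨cY, hYbd⟩ := hYbd
  have hHlow : ∀ i t (v : Fin nj → ℝ), μ * (v ⬝ᵥ v) ≤ v ⬝ᵥ (H i t *ᵥ v) := fun i t v => by
    have := (hHlb i t).dotProduct_mulVec_nonneg v
    simpa [sub_mulVec, smul_mulVec] using this
  have hsq : ∀ {k : ℕ} (v : Fin k → ℝ) a, v a ^ 2 ≤ v ⬝ᵥ v := fun v a => by
    rw [sq]
    exact Finset.single_le_sum (f := fun a => v a * v a)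
      (fun _ _ => mul_self_nonneg _) (Finset.mem_univ a)
  have hKnn : ∀ i j (v : Fin m → ℝ), 0 ≤ v ⬝ᵥ (K i j *ᵥ v) := fun i j v => by
    simpa using (hKpd i j).posSemidef.dotProduct_mulVec_nonneg v
  have hDnn : ∀ i (v : Fin nj → ℝ), 0 ≤ v ⬝ᵥ (KD i *ᵥ v) := fun i v => by
    simpa using (hKD i).posSemidef.dotProduct_mulVec_nonneg v
  have hPnn : ∀ i (v : Fin m → ℝ), 0 ≤ v ⬝ᵥ ((Pm i)⁻¹ *ᵥ v) := fun i v => by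
    simpa using (hPm i).inv.posSemidef.dotProduct_mulVec_nonneg v
  have hHnn : ∀ i t (v : Fin nj → ℝ), 0 ≤ v ⬝ᵥ (H i t *ᵥ v) := fun i t v =>
    (mul_nonneg hμ.le (Finset.sum_nonneg fun _ _ => mul_self_nonneg _)).trans (hHlow i t v)
  -- two-sided derivatives at positive times
  have hsd : ∀ i t, 0 < t → HasDerivAt (s i) (ds i t) t := fun i t ht =>
    (hs i t ht.le).hasDerivAt (Ici_mem_nhds ht)
  set dx : Fin n → ℝ → Fin m → ℝ := fun i t => -(Pm i *ᵥ ((Y i t)ᵀ *ᵥ s i t -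
          ∑ j ∈ N i, K i j *ᵥ (at' j (t - Td j i) - at' i t))) with hdx
  have hxd : ∀ i t, 0 < t → HasDerivAt (at' i) (dx i t) t := fun i t ht =>
    (hat i t ht.le).hasDerivAt (Ici_mem_nhds ht)
  have hHd' : ∀ i t, 0 < t → ∀ a b,
      HasDerivAt (fun τ => H i τ a b) ((C i t + (C i t)ᵀ) a b) t := fun i t ht a b =>
    (hHd i t ht.le a b).hasDerivAt (Ici_mem_nhds ht)
  have hYd' : ∀ i t, 0 < t → ∀ a b, HasDerivAt (fun τ => Y i τ a b) (dY i t a b) t :=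
    fun i t ht a b => (hYd i t ht.le a b).hasDerivAt (Ici_mem_nhds ht)
  -- the Lyapunov-Krasovskii functional and its dissipation rate
  set V := lyapunov H Pm N Td K s at' with hVdef
  set W := dissipation KD N Td K s at' with hWdef
  have hVd : ∀ t, 0 < t → HasDerivAt V (-W t) t := fun t ht =>
    hasDerivAt_lyapunov hNsymm hKsymm hKpd hPm (fun i => hHsymm i t) (fun i => hHd' i t ht)
      hatc (fun i => hsd i t ht) (fun i => hdyn i t ht.le) (fun i => hxd i t ht)
  have hInn : ∀ i t, 0 ≤ ∑ j ∈ N i, ∫ τ in (t - Td j i)..t, at' j τ ⬝ᵥ (K i j *ᵥ at' j τ) :=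
    fun i t => Finset.sum_nonneg fun j _ =>
      intervalIntegral.integral_nonneg (by linarith [hTd j i]) fun τ _ => hKnn i j _
  have hVi : ∀ i t, s i t ⬝ᵥ (H i t *ᵥ s i t) + at' i t ⬝ᵥ ((Pm i)⁻¹ *ᵥ at' i t) ≤ V t := by
    intro i t
    refine le_trans (le_add_of_nonneg_right (hInn i t)) ?_
    exact Finset.single_le_sum (f := fun i => s i t ⬝ᵥ (H i t *ᵥ s i t) +
      at' i t ⬝ᵥ ((Pm i)⁻¹ *ᵥ at' i t) +
      ∑ j ∈ N i, ∫ τ in (t - Td j i)..t, at' j τ ⬝ᵥ (K i j *ᵥ at' j τ))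
      (fun j _ => add_nonneg (add_nonneg (hHnn _ _ _) (hPnn _ _)) (hInn _ _))
      (Finset.mem_univ i)
  have hEnn : ∀ i t, 0 ≤ ∑ j ∈ N i, (at' j (t - Td j i) - at' i t) ⬝ᵥ
      (K i j *ᵥ (at' j (t - Td j i) - at' i t)) := fun i t =>
    Finset.sum_nonneg fun j _ => hKnn i j _
  have hWi : ∀ i t, 2 * (s i t ⬝ᵥ (KD i *ᵥ s i t)) + ∑ j ∈ N i,
      (at' j (t - Td j i) - at' i t) ⬝ᵥ (K i j *ᵥ (at' j (t - Td j i) - at' i t)) ≤ W t :=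
    fun i t => Finset.single_le_sum (f := fun i => 2 * (s i t ⬝ᵥ (KD i *ᵥ s i t)) + ∑ j ∈ N i,
      (at' j (t - Td j i) - at' i t) ⬝ᵥ (K i j *ᵥ (at' j (t - Td j i) - at' i t)))
      (fun j _ => add_nonneg (mul_nonneg two_pos.le (hDnn _ _)) (hEnn _ _)) (Finset.mem_univ i)
  have hWnn : ∀ t, 0 ≤ W t := fun t => Finset.sum_nonneg fun i _ =>
    add_nonneg (mul_nonneg two_pos.le (hDnn _ _)) (hEnn _ _)
  have hVnn : ∀ t, 0 ≤ V t := fun t => Finset.sum_nonneg fun i _ =>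
    add_nonneg (add_nonneg (hHnn _ _ _) (hPnn _ _)) (hInn _ _)
  obtain ⟨L, hL⟩ := exists_tendsto_of_deriv_nonpos hVd
    (fun t _ => neg_nonpos.2 (hWnn t)) (fun t _ => hVnn t)
  have hVB : V =O[atTop] (fun _ => (1 : ℝ)) := hL.isBigO_one ℝ
  have hVd' : ∀ᶠ t in atTop, HasDerivAt V (-W t) t := (eventually_gt_atTop 0).mono hVd
  -- boundedness of all signals
  have hsB : ∀ i a, (fun t => s i t a) =O[atTop] (fun _ => (1 : ℝ)) := fun i a =>
    isBigO_one_of_sq_le hμ hVB (Eventually.of_forall fun t => by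
      have h1 := mul_le_mul_of_nonneg_left (hsq (s i t) a) hμ.le
      linarith [hHlow i t (s i t), hVi i t, hPnn i (at' i t)])
  have hxB : ∀ i a, (fun t => at' i t a) =O[atTop] (fun _ => (1 : ℝ)) := fun i a => by
    obtain ⟨c, hc, hcx⟩ := posDef_coord_sq_le (hPm i).inv a
    exact isBigO_one_of_sq_le hc hVB (Eventually.of_forall fun t => by
      linarith [hcx (at' i t), hVi i t, hHnn i t (s i t)])
  have hshift : ∀ D : ℝ, Tendsto (fun t : ℝ => t - D) atTop atTop := fun D => by
    simpa [sub_eq_add_neg] using tendsto_atTop_add_const_right atTop (-D) tendsto_id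
  have hHB : ∀ i a b, (fun t => H i t a b) =O[atTop] (fun _ => (1 : ℝ)) := fun i a b =>
    IsBigO.of_bound (2 * M) (Eventually.of_forall fun t => by
      simpa using abs_entry_le_of_bounds hμ (hHsymm i t) (hHlb i t) (hHub i t) a b)
  have hCB : ∀ i a b, (fun t => C i t a b) =O[atTop] (fun _ => (1 : ℝ)) := fun i a b =>
    IsBigO.of_bound cC ((eventually_ge_atTop 0).mono fun t ht => by
      simpa using hCbd i t ht a b)
  have hYB : ∀ i a b, (fun t => Y i t a b) =O[atTop] (fun _ => (1 : ℝ)) := fun i a b =>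
    IsBigO.of_bound cY ((eventually_ge_atTop 0).mono fun t ht => by
      simpa using (hYbd i t ht a b).1)
  have hdYB : ∀ i a b, (fun t => dY i t a b) =O[atTop] (fun _ => (1 : ℝ)) := fun i a b =>
    IsBigO.of_bound cY ((eventually_ge_atTop 0).mono fun t ht => by
      simpa using (hYbd i t ht a b).2)
  have hcB : ∀ {p k : ℕ} (A : Matrix (Fin p) (Fin k) ℝ) a b,
      (fun _ : ℝ => A a b) =O[atTop] (fun _ => (1 : ℝ)) := fun A a b =>
    isBigO_const_const _ one_ne_zero _
  have hqB : ∀ i j b, (fun t => (at' j (t - Td j i) - at' i t) b) =O[atTop]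
      (fun _ => (1 : ℝ)) := fun i j b =>
    ((hxB j b).comp_tendsto (hshift (Td j i))).sub (hxB i b)
  have hdxB : ∀ i a, (fun t => dx i t a) =O[atTop] (fun _ => (1 : ℝ)) := fun i a => by
    refine (isBigO_mulVec (hcB (Pm i)) (fun b => ?_) a).neg_left
    simp only [Pi.sub_apply, Finset.sum_apply]
    exact (isBigO_mulVec (fun c d => hYB i d c) (hsB i) b).sub
      (IsBigO.fun_sum fun j _ => isBigO_mulVec (hcB (K i j)) (hqB i j) b)
  have hdsB : ∀ i a, (fun t => ds i t a) =O[atTop] (fun _ => (1 : ℝ)) := fun i a => by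
    set r : ℝ → Fin nj → ℝ := fun t => Y i t *ᵥ at' i t - (C i t + KD i) *ᵥ s i t with hr
    have hrB : ∀ b, (fun t => r t b) =O[atTop] (fun _ => (1 : ℝ)) := fun b =>
      (isBigO_mulVec (hYB i) (hxB i) b).sub
        (isBigO_mulVec (fun c d => (hCB i c d).add (hcB (KD i) c d)) (hsB i) b)
    have hrr : (fun t => r t ⬝ᵥ r t) =O[atTop] (fun _ => (1 : ℝ)) := by
      simp only [dotProduct]
      exact IsBigO.fun_sum fun b _ => by simpa using (hrB b).mul (hrB b)
    refine isBigO_one_of_sq_le (c := μ ^ 2) (by positivity) hrr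
      ((eventually_ge_atTop 0).mono fun t ht => ?_)
    have hHr : H i t *ᵥ ds i t = r t := eq_sub_of_add_eq (hdyn i t ht)
    have h1 := hHlow i t (ds i t)
    rw [hHr] at h1
    have h2 : 0 ≤ (r t - μ • ds i t) ⬝ᵥ (r t - μ • ds i t) :=
      Finset.sum_nonneg fun _ _ => mul_self_nonneg _
    simp only [sub_dotProduct, dotProduct_sub, smul_dotProduct, dotProduct_smul, smul_eq_mul,
      dotProduct_comm (r t) (ds i t)] at h2
    have h3 := mul_le_mul_of_nonneg_left h1 hμ.le
    have h4 := mul_le_mul_of_nonneg_left (hsq (ds i t) a) (sq_nonneg μ)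
    nlinarith
  -- Barbalat: `s` and the delayed disagreements vanish
  have hs0 : ∀ i a, Tendsto (fun t => s i t a) atTop (𝓝 0) := fun i a => by
    obtain ⟨c, hc, hcx⟩ := posDef_coord_sq_le (hKD i) a
    exact tendsto_zero_of_dissipation hc hL hVd' (Eventually.of_forall fun t => by
        linarith [hcx (s i t), hWi i t, hEnn i t, hDnn i (s i t)])
      ((eventually_gt_atTop 0).mono fun t ht => hasDerivAt_pi.1 (hsd i t ht) a)
      (hsB i a) (hdsB i a)
  have hq0 : ∀ i, ∀ j ∈ N i, ∀ b,
      Tendsto (fun t => (at' j (t - Td j i) - at' i t) b) atTop (𝓝 0) := fun i j hj b => by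
    obtain ⟨c, hc, hcx⟩ := posDef_coord_sq_le (hKpd i j) b
    refine tendsto_zero_of_dissipation (q' := fun t => dx j (t - Td j i) b - dx i t b)
      hc hL hVd' (Eventually.of_forall fun t => ?_)
      ((eventually_gt_atTop (Td j i)).mono fun t ht => ?_)
      (hqB i j b) (((hdxB j b).comp_tendsto (hshift (Td j i))).sub (hdxB i b))
    · have h1 := Finset.single_le_sum (f := fun j => (at' j (t - Td j i) - at' i t) ⬝ᵥ
        (K i j *ᵥ (at' j (t - Td j i) - at' i t))) (fun j _ => hKnn i j _) hj
      linarith [hcx (at' j (t - Td j i) - at' i t), hWi i t, hDnn i (s i t)]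
    · exact ((hasDerivAt_pi.1 (hxd j _ (sub_pos.2 ht)) b).comp_sub_const t (Td j i)).sub
        (hasDerivAt_pi.1 (hxd i t ((hTd j i).trans ht)) b)
  have hdx0 : ∀ i a, Tendsto (fun t => dx i t a) atTop (𝓝 0) := fun i a => by
    rw [← neg_zero]
    refine (tendsto_mulVec_zero (hcB (Pm i)) (fun b => ?_) a).neg
    simp only [Pi.sub_apply, Finset.sum_apply]
    rw [← sub_zero (0 : ℝ)]
    refine (tendsto_mulVec_zero (fun c d => hYB i d c) (hs0 i) b).sub ?_
    rw [← Finset.sum_const_zero (s := N i)]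
    exact tendsto_finsetSum _ fun j hj => tendsto_mulVec_zero (hcB (K i j)) (hq0 i j hj) b
  have hwin : ∀ i b {D η : ℝ}, 0 < D → 0 < η →
      ∀ᶠ t in atTop, ∀ τ ∈ Set.Icc t (t + D), |at' i τ b - at' i t b| ≤ η :=
    fun i b D η hD hη => eventually_window_of_deriv_tendsto_zero
      ((eventually_gt_atTop 0).mono fun t ht => hasDerivAt_pi.1 (hxd i t ht) b) (hdx0 i b) hD hη
  -- consensus: first for neighbours, then along paths
  have hnbr : ∀ i, ∀ j ∈ N i, ∀ b, Tendsto (fun t => at' j t b - at' i t b) atTop (𝓝 0) := by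
    intro i j hj b
    have h1 : Tendsto (fun t => at' j t b - at' j (t - Td j i) b) atTop (𝓝 0) := by
      rw [Metric.tendsto_nhds]
      intro ε hε
      filter_upwards [(hshift (Td j i)).eventually (hwin j b (hTd j i) (half_pos hε))] with t ht
      have := ht t ⟨by linarith [hTd j i], by linarith⟩
      rw [Real.dist_eq, sub_zero]
      linarith
    have h2 := h1.add (hq0 i j hj b)
    rw [add_zero] at h2
    refine h2.congr fun t => ?_
    simp only [Pi.sub_apply]; ring
  have hcons : ∀ i j b, Tendsto (fun t => at' j t b - at' i t b) atTop (𝓝 0) := by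
    intro i j b
    induction hNconn i j with
    | refl => simp
    | tail _ hjk ih =>
      have h2 := ih.add (hnbr _ _ hjk b)
      rw [add_zero] at h2
      exact h2.congr fun t => by ring
  -- the regressor output vanishes, through the momentum `H s`
  have hYx : ∀ i a, Tendsto (fun t => (Y i t *ᵥ at' i t) a) atTop (𝓝 0) := fun i a => by
    refine tendsto_zero_of_deriv_add (f := fun t => (H i t *ᵥ s i t) a)
      (g' := fun t => (dY i t *ᵥ at' i t + Y i t *ᵥ dx i t) a)
      (e := fun t => (((C i t)ᵀ - KD i) *ᵥ s i t) a)
      (tendsto_mulVec_zero (hHB i) (hs0 i) a)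
      ((eventually_gt_atTop 0).mono fun t ht => ?_)
      ((eventually_gt_atTop 0).mono fun t ht =>
        hasDerivAt_pi.1 (hasDerivAt_mulVec (hYd' i t ht) (hxd i t ht)) a)
      ((isBigO_mulVec (hdYB i) (hxB i) a).add (isBigO_mulVec (hYB i) (hdxB i) a))
      (tendsto_mulVec_zero (fun c d => (hCB i d c).sub (hcB (KD i) c d)) (hs0 i) a)
    refine (hasDerivAt_pi.1 (hasDerivAt_mulVec (hHd' i t ht) (hsd i t ht)) a).congr_deriv ?_
    rw [← hdyn i t ht.le]
    simp only [add_mulVec, sub_mulVec, Pi.add_apply, Pi.sub_apply]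
    ring
  intro i₀
  have hYx0 : ∀ i a, Tendsto (fun t => (Y i t *ᵥ at' i₀ t) a) atTop (𝓝 0) := fun i a => by
    have h2 := (hYx i a).add (tendsto_mulVec_zero (v := fun t => at' i₀ t - at' i t)
      (hYB i) (fun b => hcons i i₀ b) a)
    rw [add_zero] at h2
    refine h2.congr fun t => ?_
    simp only [mulVec_sub, Pi.sub_apply]; ring
  -- the error of one robot, frozen at the start of a window, is nearly annihilated by every
  -- regressor on that window
  have hfrozen : ∀ ε > (0 : ℝ), ∀ᶠ t in atTop, ∀ i, ∀ τ ∈ Set.Icc t (t + T), ∀ c,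
      |(Y i τ *ᵥ at' i₀ t) c| ≤ ε := by
    intro ε hε
    set η : ℝ := ε / (1 + |cY| * m) with hη
    have hden : 0 < 1 + |cY| * (m : ℝ) := by positivity
    have hη0 : 0 < η := by positivity
    have h1 : ∀ᶠ t in atTop, ∀ i c, |(Y i t *ᵥ at' i₀ t) c| ≤ η := by
      refine eventually_all.2 fun i => eventually_all.2 fun c => ?_
      filter_upwards [Metric.tendsto_nhds.1 (hYx0 i c) η hη0] with t ht
      rw [Real.dist_eq, sub_zero] at ht
      exact ht.le
    have h2 : ∀ᶠ t in atTop, ∀ b, ∀ τ ∈ Set.Icc t (t + T), |at' i₀ τ b - at' i₀ t b| ≤ η :=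
      eventually_all.2 fun b => hwin i₀ b hT hη0
    filter_upwards [eventually_forall_ge_atTop.2 h1, h2, eventually_ge_atTop 0]
      with t h1 h2 ht i τ hτ c
    have h3 : (Y i τ *ᵥ at' i₀ t) c =
        (Y i τ *ᵥ at' i₀ τ) c - (Y i τ *ᵥ (at' i₀ τ - at' i₀ t)) c := by
      simp only [mulVec_sub, Pi.sub_apply]; ring
    have h4 : |(Y i τ *ᵥ (at' i₀ τ - at' i₀ t)) c| ≤ ∑ _b : Fin m, |cY| * η := by
      change |∑ b, Y i τ c b * (at' i₀ τ - at' i₀ t) b| ≤ _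
      refine (Finset.abs_sum_le_sum_abs _ _).trans (Finset.sum_le_sum fun b _ => ?_)
      rw [abs_mul]
      exact mul_le_mul (((hYbd i τ (ht.trans hτ.1) c b).1).trans (le_abs_self _))
        (h2 b τ hτ) (abs_nonneg _) (abs_nonneg _)
    have h5 : η + ∑ _b : Fin m, |cY| * η = ε := by
      rw [hη]; simp; field_simp
    rw [h3]
    refine (abs_sub _ _).trans ?_
    linarith [h1 τ hτ.1 i c]
  have hYc : ∀ i a b, ContinuousOn (fun τ => Y i τ a b) (Set.Ici 0) := fun i a b t ht =>
    (hYd i t ht a b).continuousWithinAt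
  rw [tendsto_pi_nhds]
  intro a
  rw [Metric.tendsto_nhds]
  intro ε hε
  -- `ε'` is chosen so that `(n * nj + 1) * ε' ^ 2 = α * (ε / 2) ^ 2`
  set ε' : ℝ := Real.sqrt (α * (ε / 2) ^ 2 / (n * nj + 1)) with hε'
  have hsqrt : 0 < α * (ε / 2) ^ 2 / ((n : ℝ) * nj + 1) := by positivity
  have hε'sq : ((n : ℝ) * nj + 1) * ε' ^ 2 = α * (ε / 2) ^ 2 := by
    rw [hε', Real.sq_sqrt hsqrt.le]; field_simp
  filter_upwards [hfrozen ε' (Real.sqrt_pos.2 hsqrt), eventually_ge_atTop 0] with t h1 ht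
  have h2 := CollPEWith.dotProduct_self_le hPE hT ht hYc (at' i₀ t) h1
  have h3 : at' i₀ t a ^ 2 ≤ (ε / 2) ^ 2 := by
    refine le_of_mul_le_mul_left ?_ hα
    have := mul_le_mul_of_nonneg_left (hsq (at' i₀ t) a) hα.le
    linarith [sq_nonneg ε']
  have h4 := abs_le_of_sq_le_sq h3 (by positivity)
  rw [Pi.zero_apply, Real.dist_eq, sub_zero]
  linarith
end

section
/- Fix dimension n_j and λ > 0. Let H : [0,∞) → ℝ^{n_j×n_j} be continuously differentiable with H(t) symmetric and H'(t) = C(t) + C(t)ᵀ for a continuous C : [0,∞) → ℝ^{n_j×n_j}, let g : [0,∞) → ℝ^{n_j} be continuous, let q : [0,∞) → ℝ^{n_j} be twice continuously differentiable, and define τ(t) = H(t)q̈(t) + C(t)q̇(t) + g(t). Then for all t ≥ 0, ∫_0^t λ e^{−λ(t−σ)} τ(σ) dσ = λ H(t)q̇(t) − λ e^{−λ t} H(0)q̇(0) − ∫_0^t λ e^{−λ(t−σ)} [λ H(σ)q̇(σ) + C(σ)ᵀq̇(σ) − g(σ)] dσ. -/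
open Matrix MeasureTheory Filter Topology

/-!
The function `F σ = λ e^{−λ(t−σ)} (H q̇)(σ)` is differentiable on `[0, ∞)`, and by the product
rule together with `H' = C + Cᵀ`,
`F' = λ e^{−λ(t−σ)} (λ H q̇ + C q̇ + Cᵀ q̇ + H q̈)
    = λ e^{−λ(t−σ)} τ + λ e^{−λ(t−σ)} (λ H q̇ + Cᵀ q̇ − g)`.
Both summands are continuous, so integrating over `[0, t]` by the fundamental theorem of calculus
gives the identity.
-/

/-- If all entries of a matrix and of a vector are continuous on `s`, so is each component of their
product. -/
theorem continuousOn_mulVec_apply {n : ℕ} {s : Set ℝ} {A : ℝ → Matrix (Fin n) (Fin n) ℝ}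
    {v : ℝ → Fin n → ℝ} (hA : ∀ a b, ContinuousOn (fun x => A x a b) s)
    (hv : ∀ b, ContinuousOn (fun x => v x b) s) (k : Fin n) :
    ContinuousOn (fun x => (A x *ᵥ v x) k) s := by
  simp only [Matrix.mulVec, dotProduct]
  exact continuousOn_finsetSum _ fun j _ => (hA k j).mul (hv j)

/-- Product rule for a component of a matrix-vector product. -/
theorem hasDerivWithinAt_mulVec_apply {n : ℕ} {s : Set ℝ} {x : ℝ}
    {A : ℝ → Matrix (Fin n) (Fin n) ℝ} {A' : Matrix (Fin n) (Fin n) ℝ}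
    {v : ℝ → Fin n → ℝ} {v' : Fin n → ℝ}
    (hA : ∀ a b, HasDerivWithinAt (fun y => A y a b) (A' a b) s x)
    (hv : HasDerivWithinAt v v' s x) (k : Fin n) :
    HasDerivWithinAt (fun y => (A y *ᵥ v y) k) ((A' *ᵥ v x + A x *ᵥ v') k) s x := by
  have hv' := hasDerivWithinAt_pi.1 hv
  simp only [Matrix.mulVec, dotProduct, Pi.add_apply, ← Finset.sum_add_distrib]
  exact HasDerivWithinAt.fun_sum fun j _ => (hA k j).mul (hv' j)

/-- the filtered-torque identity of composite adaptive control.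
With `τ = H q̈ + C q̇ + g` and the skew-symmetry property `H' = C + Cᵀ`, convolution with
the impulse response `λ e^{−λ t}` of the filter `λ/(p+λ)` and integration by parts gives
`∫₀ᵗ λ e^{−λ(t−σ)} τ(σ) dσ
  = λ H(t) q̇(t) − λ e^{−λ t} H(0) q̇(0) − ∫₀ᵗ λ e^{−λ(t−σ)} [λ H q̇ + Cᵀ q̇ − g](σ) dσ`
(stated componentwise). -/
theorem filtered_torque_identity (nj : ℕ) (lam : ℝ) (hlam : 0 < lam)
    (H C : ℝ → Matrix (Fin nj) (Fin nj) ℝ)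
    (g : ℝ → Fin nj → ℝ)
    (q dq ddq : ℝ → Fin nj → ℝ)
    (tau : ℝ → Fin nj → ℝ)
    -- `H t` symmetric, continuously differentiable with `H' = C + Cᵀ`, `C` continuous
    (hHsymm : ∀ t, 0 ≤ t → (H t).IsSymm)
    (hHd : ∀ t, 0 ≤ t → ∀ a b,
      HasDerivWithinAt (fun τ => H τ a b) ((C t + (C t)ᵀ) a b) (Set.Ici 0) t)
    (hCc : ∀ a b, ContinuousOn (fun t => C t a b) (Set.Ici 0))
    -- `g` continuous
    (hgc : ∀ k, ContinuousOn (fun t => g t k) (Set.Ici 0))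
    -- `q` twice continuously differentiable
    (hq : ∀ t, 0 ≤ t → HasDerivWithinAt q (dq t) (Set.Ici 0) t)
    (hdq : ∀ t, 0 ≤ t → HasDerivWithinAt dq (ddq t) (Set.Ici 0) t)
    (hddqc : ∀ k, ContinuousOn (fun t => ddq t k) (Set.Ici 0))
    -- the torque along the trajectory
    (htau : ∀ t, 0 ≤ t → tau t = H t *ᵥ ddq t + C t *ᵥ dq t + g t) :
    ∀ t, 0 ≤ t → ∀ k : Fin nj,
      (∫ σ in (0:ℝ)..t, lam * Real.exp (-lam * (t - σ)) * tau σ k) =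
        lam * (H t *ᵥ dq t) k - lam * Real.exp (-lam * t) * (H 0 *ᵥ dq 0) k -
          ∫ σ in (0:ℝ)..t, lam * Real.exp (-lam * (t - σ)) *
            (lam • (H σ *ᵥ dq σ) + (C σ)ᵀ *ᵥ dq σ - g σ) k := by
  intro t ht k
  have hsub : Set.Icc 0 t ⊆ Set.Ici (0 : ℝ) := fun x hx => hx.1
  have hHc : ∀ a b, ContinuousOn (fun x => H x a b) (Set.Ici 0) :=
    fun a b x hx => (hHd x hx a b).continuousWithinAt
  have hdqc : ∀ b, ContinuousOn (fun x => dq x b) (Set.Ici 0) :=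
    fun b x hx => (hasDerivWithinAt_pi.1 (hdq x hx) b).continuousWithinAt
  have hexp : ContinuousOn (fun σ => lam * Real.exp (-lam * (t - σ))) (Set.Ici 0) := by
    fun_prop
  have hHdq := continuousOn_mulVec_apply hHc hdqc k
  have hCTdq := continuousOn_mulVec_apply (A := fun x => (C x)ᵀ) (fun a b => hCc b a) hdqc k
  have htauc : ContinuousOn (fun σ => tau σ k) (Set.Ici 0) :=
    (((continuousOn_mulVec_apply hHc hddqc k).add
      (continuousOn_mulVec_apply hCc hdqc k)).add (hgc k)).congr fun x hx => by
        simp [htau x hx]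
  have hint1 : IntervalIntegrable (fun σ => lam * Real.exp (-lam * (t - σ)) * tau σ k)
      volume 0 t :=
    ((hexp.mul htauc).mono hsub).intervalIntegrable_of_Icc ht
  have hint2 : IntervalIntegrable (fun σ => lam * Real.exp (-lam * (t - σ)) *
      (lam • (H σ *ᵥ dq σ) + (C σ)ᵀ *ᵥ dq σ - g σ) k) volume 0 t :=
    ((hexp.mul (((hHdq.const_smul lam).add hCTdq).sub (hgc k))).mono
      hsub).intervalIntegrable_of_Icc ht
  have hderiv : ∀ σ, 0 ≤ σ → HasDerivWithinAt
      (fun σ => lam * Real.exp (-lam * (t - σ)) * (H σ *ᵥ dq σ) k)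
      (lam * Real.exp (-lam * (t - σ)) * tau σ k + lam * Real.exp (-lam * (t - σ)) *
        (lam • (H σ *ᵥ dq σ) + (C σ)ᵀ *ᵥ dq σ - g σ) k) (Set.Ici 0) σ := by
    intro σ hσ
    have he : HasDerivAt (fun σ => lam * Real.exp (-lam * (t - σ)))
        (lam * (Real.exp (-lam * (t - σ)) * (-lam * (-1)))) σ :=
      ((((hasDerivAt_id σ).const_sub t).const_mul (-lam)).exp).const_mul lam
    refine (he.hasDerivWithinAt.mul
      (hasDerivWithinAt_mulVec_apply (hHd σ hσ) (hdq σ hσ) k)).congr_deriv ?_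
    rw [htau σ hσ, Matrix.add_mulVec]
    simp only [Pi.add_apply, Pi.sub_apply, Pi.smul_apply, smul_eq_mul]
    ring
  have hftc := intervalIntegral.integral_eq_sub_of_hasDerivAt_of_le ht
    (fun σ hσ => ((hderiv σ hσ.1).continuousWithinAt).mono hsub)
    (fun σ hσ => (hderiv σ hσ.1.le).hasDerivAt (Ici_mem_nhds hσ.1)) (hint1.add hint2)
  rw [intervalIntegral.integral_add hint1 hint2] at hftc
  simp only [sub_self, sub_zero, mul_zero, Real.exp_zero, mul_one] at hftc
  linarith
end

section
/- Fix dimension n_j and λ > 0. Let H : [0,∞) → ℝ^{n_j×n_j} be continuously differentiable with H(t) symmetric and H'(t) = C(t) + C(t)ᵀ for a continuous C : [0,∞) → ℝ^{n_j×n_j}, let g : [0,∞) → ℝ^{n_j} be continuous, let q : [0,∞) → ℝ^{n_j} be twice continuously differentiable, and define τ(t) = H(t)q̈(t) + C(t)q̇(t) + g(t). Then for all t ≥ 0, ∫_0^t λ e^{−λ(t−σ)} q̇(σ)ᵀτ(σ) dσ = (λ/2) q̇(t)ᵀH(t)q̇(t) − λ e^{−λ t} (1/2) q̇(0)ᵀH(0)q̇(0)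 − ∫_0^t λ e^{−λ(t−σ)} [(λ/2) q̇(σ)ᵀH(σ)q̇(σ) − q̇(σ)ᵀg(σ)] dσ. -/
open Matrix MeasureTheory Filter Topology

/-!
The identity is the fundamental theorem of calculus for the weighted kinetic energy
`σ ↦ λ e^{−λ(t−σ)} · (1/2) q̇(σ)ᵀ H(σ) q̇(σ)`. Because `H` is symmetric and `H' = C + Cᵀ`, the kinetic
energy has derivative `q̇ᵀ (H q̈ + C q̇)` (`hasDerivWithinAt_kineticEnergy`), that is `q̇ᵀ τ − q̇ᵀ g`,
while differentiating the exponential weight contributes the factor `λ`. Hence the derivative of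
the weighted energy is the sum of the two integrands in the identity, both of which are continuous
on `[0, ∞)`, and its increment over `[0, t]` is the boundary term.
-/

/-- The power balance without external forces: `d/dt [(1/2) vᵀ H v] = vᵀ (H v' + C v)`.
Symmetry of `H` merges the two terms in which `v` is differentiated, and `H' = C + Cᵀ` gives
`(1/2) vᵀ H' v = vᵀ C v`. -/
lemma hasDerivWithinAt_kineticEnergy {n : ℕ} {H : ℝ → Matrix (Fin n) (Fin n) ℝ}
    {C : Matrix (Fin n) (Fin n) ℝ} {v : ℝ → Fin n → ℝ} {a : Fin n → ℝ} {s : Set ℝ} {t : ℝ}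
    (hsymm : (H t).IsSymm)
    (hH : ∀ i j, HasDerivWithinAt (fun σ => H σ i j) ((C + Cᵀ) i j) s t)
    (hv : HasDerivWithinAt v a s t) :
    HasDerivWithinAt (fun σ => (1 / 2) * (v σ ⬝ᵥ (H σ *ᵥ v σ)))
      (v t ⬝ᵥ (H t *ᵥ a + C *ᵥ v t)) s t := by
  have hvi : ∀ i, HasDerivWithinAt (fun σ => v σ i) (a i) s t := hasDerivWithinAt_pi.1 hv
  have key : HasDerivWithinAt (fun σ => (1 / 2) * (v σ ⬝ᵥ (H σ *ᵥ v σ)))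
      ((1 / 2) * (a ⬝ᵥ (H t *ᵥ v t) + v t ⬝ᵥ ((C + Cᵀ) *ᵥ v t + H t *ᵥ a))) s t := by
    have h := (HasDerivWithinAt.fun_sum (u := Finset.univ) fun i _ =>
      (hvi i).fun_mul (HasDerivWithinAt.fun_sum (u := Finset.univ) fun j _ =>
        (hH i j).fun_mul (hvi j))).const_mul (1 / 2 : ℝ)
    refine h.congr_deriv ?_
    simp only [dotProduct, mulVec, Pi.add_apply, Finset.sum_add_distrib]
  refine key.congr_deriv ?_
  have hHva : a ⬝ᵥ (H t *ᵥ v t) = v t ⬝ᵥ (H t *ᵥ a) := by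
    rw [dotProduct_mulVec, ← mulVec_transpose, hsymm.eq, dotProduct_comm]
  have hCt : v t ⬝ᵥ (Cᵀ *ᵥ v t) = v t ⬝ᵥ (C *ᵥ v t) := by
    rw [mulVec_transpose, dotProduct_comm, ← dotProduct_mulVec]
  simp only [add_mulVec, dotProduct_add, hHva, hCt]
  ring

lemma continuousOn_dotProduct {n : ℕ} {u v : ℝ → Fin n → ℝ} {s : Set ℝ}
    (hu : ∀ i, ContinuousOn (fun t => u t i) s) (hv : ∀ i, ContinuousOn (fun t => v t i) s) :
    ContinuousOn (fun t => u t ⬝ᵥ v t) s :=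
  continuousOn_finsetSum _ fun i _ => (hu i).mul (hv i)

/-- the filtered-energy identity of composite adaptive control.
With `τ = H q̈ + C q̇ + g` and the skew-symmetry property `H' = C + Cᵀ`, low-pass
filtering the power balance `q̇ᵀ τ = d/dt[(1/2) q̇ᵀ H q̇] + q̇ᵀ g` with the filter
`λ/(p+λ)` of impulse response `λ e^{−λt}` and integrating by parts gives
`∫₀ᵗ λ e^{−λ(t−σ)} q̇(σ)ᵀ τ(σ) dσ = (λ/2) q̇(t)ᵀ H(t) q̇(t)
  − λ e^{−λ t} (1/2) q̇(0)ᵀ H(0) q̇(0)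
  − ∫₀ᵗ λ e^{−λ(t−σ)} [(λ/2) q̇ᵀ H q̇ − q̇ᵀ g](σ) dσ`. -/
theorem filtered_energy_identity (nj : ℕ) (lam : ℝ) (hlam : 0 < lam)
    (H C : ℝ → Matrix (Fin nj) (Fin nj) ℝ)
    (g : ℝ → Fin nj → ℝ)
    (q dq ddq : ℝ → Fin nj → ℝ)
    (tau : ℝ → Fin nj → ℝ)
    -- `H t` symmetric, continuously differentiable with `H' = C + Cᵀ`, `C` continuous
    (hHsymm : ∀ t, 0 ≤ t → (H t).IsSymm)
    (hHd : ∀ t, 0 ≤ t → ∀ a b,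
      HasDerivWithinAt (fun τ => H τ a b) ((C t + (C t)ᵀ) a b) (Set.Ici 0) t)
    (hCc : ∀ a b, ContinuousOn (fun t => C t a b) (Set.Ici 0))
    -- `g` continuous
    (hgc : ∀ k, ContinuousOn (fun t => g t k) (Set.Ici 0))
    -- `q` twice continuously differentiable
    (hq : ∀ t, 0 ≤ t → HasDerivWithinAt q (dq t) (Set.Ici 0) t)
    (hdq : ∀ t, 0 ≤ t → HasDerivWithinAt dq (ddq t) (Set.Ici 0) t)
    (hddqc : ∀ k, ContinuousOn (fun t => ddq t k) (Set.Ici 0))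
    -- the torque along the trajectory
    (htau : ∀ t, 0 ≤ t → tau t = H t *ᵥ ddq t + C t *ᵥ dq t + g t) :
    ∀ t, 0 ≤ t →
      (∫ σ in (0:ℝ)..t, lam * Real.exp (-lam * (t - σ)) * (dq σ ⬝ᵥ tau σ)) =
        (lam / 2) * (dq t ⬝ᵥ (H t *ᵥ dq t)) -
          lam * Real.exp (-lam * t) * ((1/2) * (dq 0 ⬝ᵥ (H 0 *ᵥ dq 0))) -
          ∫ σ in (0:ℝ)..t, lam * Real.exp (-lam * (t - σ)) *
            ((lam / 2) * (dq σ ⬝ᵥ (H σ *ᵥ dq σ)) - dq σ ⬝ᵥ g σ) := by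
  intro t ht
  have hdqc : ∀ i, ContinuousOn (fun t => dq t i) (Set.Ici 0) := fun i σ hσ =>
    (hasDerivWithinAt_pi.1 (hdq σ hσ) i).continuousWithinAt
  have hHc : ∀ i j, ContinuousOn (fun t => H t i j) (Set.Ici 0) := fun i j σ hσ =>
    (hHd σ hσ i j).continuousWithinAt
  have hwc : ContinuousOn (fun σ => lam * Real.exp (-lam * (t - σ))) (Set.Ici 0) := by fun_prop
  have hHv : ContinuousOn (fun σ => dq σ ⬝ᵥ (H σ *ᵥ dq σ)) (Set.Ici 0) :=
    continuousOn_dotProduct hdqc fun i => continuousOn_dotProduct (hHc i) hdqc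
  have htauc : ∀ i, ContinuousOn (fun σ => tau σ i) (Set.Ici 0) := by
    intro i
    refine (((continuousOn_dotProduct (hHc i) hddqc).add
      (continuousOn_dotProduct (hCc i) hdqc)).add (hgc i)).congr fun σ hσ => ?_
    simp [htau σ hσ, mulVec]
  have hsub : Set.uIcc 0 t ⊆ Set.Ici 0 := by
    rw [Set.uIcc_of_le ht]; exact Set.Icc_subset_Ici_self
  have hint₁ : IntervalIntegrable
      (fun σ => lam * Real.exp (-lam * (t - σ)) * (dq σ ⬝ᵥ tau σ)) volume 0 t :=
    ((hwc.mul (continuousOn_dotProduct hdqc htauc)).mono hsub).intervalIntegrable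
  have hint₂ : IntervalIntegrable
      (fun σ => lam * Real.exp (-lam * (t - σ)) *
        ((lam / 2) * (dq σ ⬝ᵥ (H σ *ᵥ dq σ)) - dq σ ⬝ᵥ g σ)) volume 0 t :=
    ((hwc.mul ((hHv.const_mul (lam / 2)).sub
      (continuousOn_dotProduct hdqc hgc))).mono hsub).intervalIntegrable
  have hderiv : ∀ σ, 0 ≤ σ → HasDerivWithinAt
      (fun σ => lam * Real.exp (-lam * (t - σ)) * ((1 / 2) * (dq σ ⬝ᵥ (H σ *ᵥ dq σ))))
      (lam * Real.exp (-lam * (t - σ)) * (dq σ ⬝ᵥ tau σ) +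
        lam * Real.exp (-lam * (t - σ)) *
          ((lam / 2) * (dq σ ⬝ᵥ (H σ *ᵥ dq σ)) - dq σ ⬝ᵥ g σ)) (Set.Ici 0) σ := by
    intro σ hσ
    have hw : HasDerivAt (fun σ => lam * Real.exp (-lam * (t - σ)))
        (lam * (Real.exp (-lam * (t - σ)) * (-lam * -1))) σ :=
      ((((hasDerivAt_id σ).const_sub t).const_mul (-lam)).exp).const_mul lam
    refine (hw.hasDerivWithinAt.fun_mul (hasDerivWithinAt_kineticEnergy
      (hHsymm σ hσ) (hHd σ hσ) (hdq σ hσ))).congr_deriv ?_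
    rw [htau σ hσ, dotProduct_add _ _ (g σ)]
    ring
  have hFTC := intervalIntegral.integral_eq_sub_of_hasDerivAt_of_le ht
    (fun σ hσ => (hderiv σ hσ.1).continuousWithinAt.mono Set.Icc_subset_Ici_self)
    (fun σ hσ => (hderiv σ hσ.1.le).hasDerivAt (Ici_mem_nhds hσ.1)) (hint₁.add hint₂)
  rw [intervalIntegral.integral_add hint₁ hint₂] at hFTC
  simp only [sub_self, sub_zero, mul_zero, Real.exp_zero] at hFTC
  linarith
end
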